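/- There is a constant C > 0 with the following properties. Define ρⁿ(x) = ψ_n'(x)² − (x²/(4·n^{2/3}) + x)·ψ_n(x)² and ρ(x) = Ai'(x)² − x·Ai(x)². Then: (i) |ρⁿ(x) − ρ̂ⁿ(x)| ≤ C/|x| for every integer n ≥ 1 and every x ∈ [−2·n^{2/3}, ∞) with x ≠ 0; (ii) |ρ(x) − ρ̂(x)| ≤ C/|x| for every x ∈ ℝ with x ≠ 0; (iii) ρⁿ(x) ≤ C·√(|x| + 1) for every n ≥ 1 and every x ∈ ℝ; (iv) ρ(x) ≤ C·√(|x| + 1) for every x ∈ ℝ. -/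

import Mathlib

open MeasureTheory Filter Set

noncomputable section

/-- The Airy function `Ai(x) = (1/π)·lim_{b→∞} ∫_0^b cos(t³/3 + x·t) dt`. -/
def Ai (x : ℝ) : ℝ :=
  (1 / Real.pi) *
    limUnder Filter.atTop (fun b : ℝ => ∫ t in (0:ℝ)..b, Real.cos (t ^ 3 / 3 + x * t))

/-- The Airy kernel. -/
def KAi (x y : ℝ) : ℝ :=
  if x = y then (deriv Ai x) ^ 2 - x * (Ai x) ^ 2
  else (Ai x * deriv Ai y - deriv Ai x * Ai y) / (x - y)

/-- One-point correlation function of the Airy₂ random point field. -/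
def rho (x : ℝ) : ℝ := (deriv Ai x) ^ 2 - x * (Ai x) ^ 2

/-- Probabilists' Hermite polynomial `Ĥ_m(x) = (−1)^m e^{x²/2} (d/dx)^m e^{−x²/2}`. -/
def hermiteP (m : ℕ) (x : ℝ) : ℝ :=
  (-1 : ℝ) ^ m * Real.exp (x ^ 2 / 2) * iteratedDeriv m (fun t => Real.exp (-t ^ 2 / 2)) x

/-- Normalized oscillator function `φ_m`. -/
def osc (m : ℕ) (x : ℝ) : ℝ :=
  (2 * Real.pi) ^ (-(1:ℝ)/4) * ((m.factorial : ℝ)) ^ (-(1:ℝ)/2) *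
    Real.exp (-x ^ 2 / 4) * hermiteP m x

/-- `ψ_mⁿ(x) = n^{1/12}·φ_m(2√n + n^{−1/6}·x)`. -/
def psiUp (n m : ℕ) (x : ℝ) : ℝ :=
  (n : ℝ) ^ ((1:ℝ)/12) * osc m (2 * Real.sqrt n + (n : ℝ) ^ (-(1:ℝ)/6) * x)

/-- `ψ_n = ψ_nⁿ`. -/
def psiN (n : ℕ) : ℝ → ℝ := psiUp n n

/-- The finite-`n` Airy kernel. -/
def KAiN (n : ℕ) (x y : ℝ) : ℝ :=
  if x = y then
    (deriv (psiN n) x) ^ 2 - psiN n x * deriv (deriv (psiN n)) x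
      - (1 / (2 * (n : ℝ) ^ ((1:ℝ)/3))) * (psiN n x) ^ 2
  else
    (psiN n x * deriv (psiN n) y - deriv (psiN n) x * psiN n y) / (x - y)
      - (1 / (2 * (n : ℝ) ^ ((1:ℝ)/3))) * (psiN n x * psiN n y)

/-- `(εf)(x) = (1/2)·∫_ℝ sign(x − y)·f(y) dy`. -/
def epsF (f : ℝ → ℝ) (x : ℝ) : ℝ := (1/2) * ∫ y : ℝ, Real.sign (x - y) * f y

/-- `εψ_n`. -/
def epsPsi (n : ℕ) : ℝ → ℝ := epsF (psiN n)

/-- `J₁(x,y) = K_Ai(x,y) + (1/2)·Ai(x)·(1 − ∫_y^∞ Ai(u) du)`. -/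
def J1 (x y : ℝ) : ℝ := KAi x y + (1/2) * Ai x * (1 - ∫ u in Set.Ioi y, Ai u)

/-- Scalar part of the quaternion product of Airy₁ kernels. -/
def L1 (x y : ℝ) : ℝ :=
  J1 x y * J1 y x -
    deriv (fun v => J1 x v) y * ((∫ u in x..y, J1 u x) - (1/2) * Real.sign (y - x))

/-- `J₁ⁿ(x,y) = K_Aiⁿ(x,y) + (1/2)·ψ_{n−1}ⁿ(x)·(εψ_n)(y)`. -/
def J1N (n : ℕ) (x y : ℝ) : ℝ :=
  KAiN n x y + (1/2) * psiUp n (n - 1) x * epsPsi n y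

/-- Scalar part of the quaternion product of finite-`n` Airy₁ kernels. -/
def L1N (n : ℕ) (x y : ℝ) : ℝ :=
  J1N n x y * J1N n y x -
    deriv (fun v => J1N n x v) y * ((∫ u in x..y, J1N n u x) - (1/2) * Real.sign (y - x))

/-- `ρ̂(x) = (1/π)·√(−x)` for `x < 0`, and `0` otherwise. -/
def rhoHat (x : ℝ) : ℝ := if x < 0 then Real.sqrt (-x) / Real.pi else 0

/-- `ρ̂ⁿ(x) = (1/π)·√(−x·(1 + x/(4·n^{2/3})))` on `(−4n^{2/3}, 0)`, and `0` otherwise. -/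
def rhoHatN (n : ℕ) (x : ℝ) : ℝ :=
  if -(4 * (n : ℝ) ^ ((2:ℝ)/3)) < x ∧ x < 0 then
    Real.sqrt (-x * (1 + x / (4 * (n : ℝ) ^ ((2:ℝ)/3)))) / Real.pi
  else 0

/-- `G_{a,b,c}(x,y) = |x|^{−a}·|y|^{−b}·|x−y|^{−c}`. -/
def Gf (a b c : ℝ) (x y : ℝ) : ℝ := |x| ^ (-a) * |y| ^ (-b) * |x - y| ^ (-c)

/-- `Ĝ_{a,b,c}(x,y) = G_{a,b,c}(x,y) + G_{a,b,c}(y,x)`. -/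
def Ghat (a b c : ℝ) (x y : ℝ) : ℝ := Gf a b c x y + Gf a b c y x

/-- Soft-edge one-point correlation function of the `n`-point GUE ensemble. -/
def rhoN (n : ℕ) (x : ℝ) : ℝ :=
  (deriv (psiN n) x) ^ 2 - (x ^ 2 / (4 * (n : ℝ) ^ ((2:ℝ)/3)) + x) * (psiN n x) ^ 2

end
/-!
Both `Ai` and `ψ_n` solve the edge equation `f'' = (x + e² x² / 4 - e / 2) f`, with `e = 0` for
`Ai` and `e = n^{-1/3}` for `ψ_n`, and in either case the one-point function is
`f'² - (x + e² x² / 4) f²`. For `x = -s` with `s ≥ 2` and `e² s ≤ 2` the solution oscillates with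
the slowly varying frequency `R = √(s - e² s² / 4 + e / 2)`, and the WKB energy `f'² / R + R f²`,
after adding a cross term of lower order, is monotone up to factors `exp (± O(s^{-3/2}))`. Hence it
stays within `O(s^{-3/2})` of its value far inside the bulk, and that value is `1 / π`: for `ψ_n`
it is computed at the centre of the spectrum from `φ_n(0)` and `φ_n'(0)` with Wallis' product, and
for `Ai` it is the limit at `-∞`, computed by steepest descent on the contour integral of `Ai`.
Multiplying the energy by `R` gives `√(s - e² s² / 4) / π + O(1 / s)` for the one-point function.
For positive `x` the one-point function is controlled by its monotonicity and the decay of `f`.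
-/

noncomputable section

open Real
open scoped Topology

/-! ### Second order linear equations -/

theorem antitoneOn_of_hasDerivAt_nonpos {D : Set ℝ} (hD : Convex ℝ D) {h h' : ℝ → ℝ}
    (hd : ∀ x ∈ D, HasDerivAt h (h' x) x) (hn : ∀ x ∈ D, h' x ≤ 0) : AntitoneOn h D :=
  antitoneOn_of_hasDerivWithinAt_nonpos hD
    (fun x hx => (hd x hx).continuousAt.continuousWithinAt)
    (fun x hx => (hd x (interior_subset hx)).hasDerivWithinAt)
    (fun x hx => hn x (interior_subset hx))

theorem antitoneOn_mul_exp {D : Set ℝ} (hD : Convex ℝ D) {h h' B B' : ℝ → ℝ}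
    (hh : ∀ x ∈ D, HasDerivAt h (h' x) x) (hB : ∀ x ∈ D, HasDerivAt B (B' x) x)
    (hn : ∀ x ∈ D, h' x + B' x * h x ≤ 0) : AntitoneOn (fun x => h x * exp (B x)) D := by
  refine antitoneOn_of_hasDerivAt_nonpos hD
    (h' := fun x => (h' x + B' x * h x) * exp (B x)) (fun x hx => ?_)
    fun x hx => mul_nonpos_of_nonpos_of_nonneg (hn x hx) (exp_pos _).le
  exact ((hh x hx).mul (hB x hx).exp).congr_deriv (by ring)

/-- `f` solves `f'' = q f` on the real line; the derivative `g = f'` is carried along, so that the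
equation is a first order system. -/
structure IsSchrodingerSolution (q f g : ℝ → ℝ) : Prop where
  hasDerivAt : ∀ x, HasDerivAt f (g x) x
  hasDerivAt_deriv : ∀ x, HasDerivAt g (q x * f x) x

namespace IsSchrodingerSolution

variable {q q' f g : ℝ → ℝ} {a : ℝ}

theorem comp_neg (h : IsSchrodingerSolution q f g) :
    IsSchrodingerSolution (fun s => q (-s)) (fun s => f (-s)) (fun s => -g (-s)) where
  hasDerivAt s := ((h.hasDerivAt (-s)).comp s (hasDerivAt_neg s)).congr_deriv (by ring)
  hasDerivAt_deriv s :=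
    ((h.hasDerivAt_deriv (-s)).comp s (hasDerivAt_neg s)).fun_neg.congr_deriv (by ring)

theorem hasDerivAt_mul (h : IsSchrodingerSolution q f g) (x : ℝ) :
    HasDerivAt (fun y => f y * g y) (g x ^ 2 + q x * f x ^ 2) x :=
  ((h.hasDerivAt x).fun_mul (h.hasDerivAt_deriv x)).congr_deriv (by ring)

theorem hasDerivAt_energy (h : IsSchrodingerSolution q f g) {x : ℝ}
    (hq : HasDerivAt q (q' x) x) :
    HasDerivAt (fun y => g y ^ 2 - q y * f y ^ 2) (-(q' x * f x ^ 2)) x :=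
  (((h.hasDerivAt_deriv x).fun_pow 2).fun_sub (hq.fun_mul ((h.hasDerivAt x).fun_pow 2))).congr_deriv
    (by push_cast; ring)

theorem sq_add_sq_le_mul_exp (h : IsSchrodingerSolution q f g) {b M : ℝ}
    (hM : ∀ x ∈ Icc a b, |1 + q x| ≤ M) {x : ℝ} (hx : x ∈ Icc a b) :
    f x ^ 2 + g x ^ 2 ≤ (f a ^ 2 + g a ^ 2) * exp (M * (x - a)) := by
  set N : ℝ → ℝ := fun y => f y ^ 2 + g y ^ 2
  have norm_N (y : ℝ) : ‖N y‖ = N y := norm_of_nonneg (by positivity)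
  have hN (y : ℝ) : HasDerivAt N ((1 + q y) * (2 * (f y * g y))) y :=
    (((h.hasDerivAt y).fun_pow 2).fun_add ((h.hasDerivAt_deriv y).fun_pow 2)).congr_deriv
      (by push_cast; ring)
  have growth : ∀ y ∈ Ico a b, ‖(1 + q y) * (2 * (f y * g y))‖ ≤ M * ‖N y‖ + 0 := fun y hy => by
    have hfg : |2 * (f y * g y)| ≤ N y :=
      abs_le.2 ⟨by linarith only [sq_nonneg (f y + g y)], by linarith only [sq_nonneg (f y - g y)]⟩
    rw [norm_mul, norm_N, add_zero]
    exact mul_le_mul (hM y (Ico_subset_Icc_self hy)) hfg (norm_nonneg _)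
      ((abs_nonneg _).trans (hM y (Ico_subset_Icc_self hy)))
  have := norm_le_gronwallBound_of_norm_deriv_right_le
    (fun y _ => (hN y).continuousAt.continuousWithinAt) (fun y _ => (hN y).hasDerivWithinAt)
    (norm_N a).le growth x hx
  rwa [norm_N, gronwallBound_ε0] at this

theorem energy_nonneg (h : IsSchrodingerSolution q f g)
    (hq : ∀ x ∈ Ici a, HasDerivAt q (q' x) x) (hq' : ∀ x ∈ Ici a, 0 ≤ q' x)
    (lim : Tendsto (fun x => g x ^ 2 - q x * f x ^ 2) atTop (𝓝 0)) :
    ∀ x ∈ Ici a, 0 ≤ g x ^ 2 - q x * f x ^ 2 := fun x hx => by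
  have anti := antitoneOn_of_hasDerivAt_nonpos (convex_Ici a)
    (fun y hy => h.hasDerivAt_energy (hq y hy))
    fun y hy => neg_nonpos.2 (mul_nonneg (hq' y hy) (sq_nonneg _))
  refine le_of_tendsto lim ?_
  filter_upwards [eventually_ge_atTop x] with y hy using anti hx (le_trans hx hy) hy

theorem mul_deriv_nonpos (h : IsSchrodingerSolution q f g) (hq : ∀ x ∈ Ici a, 0 ≤ q x)
    (lim : Tendsto (fun x => f x * g x) atTop (𝓝 0)) : ∀ x ∈ Ici a, f x * g x ≤ 0 := fun x hx => by
  have anti := antitoneOn_of_hasDerivAt_nonpos (convex_Ici a) (fun y _ => (h.hasDerivAt_mul y).neg)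
    fun y hy => neg_nonpos.2 (add_nonneg (sq_nonneg _) (mul_nonneg (hq y hy) (sq_nonneg _)))
  refine ge_of_tendsto lim ?_
  filter_upwards [eventually_ge_atTop x] with y hy
    using neg_le_neg_iff.1 (anti hx (le_trans hx hy) hy)

theorem antitoneOn_id_mul_energy_sub (h : IsSchrodingerSolution q f g) (ha : 0 ≤ a)
    (hq : ∀ x ∈ Ici a, HasDerivAt q (q' x) x) (hq' : ∀ x ∈ Ici a, 0 ≤ q' x)
    (hq0 : ∀ x ∈ Ici a, 0 ≤ q x) :
    AntitoneOn (fun x => x * (g x ^ 2 - q x * f x ^ 2) - f x * g x) (Ici a) := by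
  refine antitoneOn_of_hasDerivAt_nonpos (convex_Ici a)
    (h' := fun x => -(2 * (q x * f x ^ 2) + x * (q' x * f x ^ 2))) (fun x hx => ?_) fun x hx => ?_
  · exact (((hasDerivAt_id x).fun_mul (h.hasDerivAt_energy (hq x hx))).fun_sub
      (h.hasDerivAt_mul x)).congr_deriv (by simp only [id]; ring)
  · have := hq' x hx
    have := hq0 x hx
    have : 0 ≤ x := ha.trans hx
    exact neg_nonpos.2 (by positivity)

theorem antitoneOn_id_mul_sq (h : IsSchrodingerSolution q f g) (ha : 1 ≤ a)
    (hq : ∀ x ∈ Ici a, 1 / 4 ≤ q x) (energy : ∀ x ∈ Ici a, 0 ≤ g x ^ 2 - q x * f x ^ 2)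
    (hfg : ∀ x ∈ Ici a, f x * g x ≤ 0) : AntitoneOn (fun x => x * f x ^ 2) (Ici a) := by
  refine antitoneOn_of_hasDerivAt_nonpos (convex_Ici a)
    (h' := fun x => f x ^ 2 + 2 * x * (f x * g x)) (fun x _ => ?_) fun x hx => ?_
  · exact ((hasDerivAt_id x).fun_mul ((h.hasDerivAt x).fun_pow 2)).congr_deriv
      (by simp only [id]; push_cast; ring)
  · have sq_le : f x ^ 2 / 4 ≤ g x ^ 2 := by
      nlinarith only [energy x hx, mul_le_mul_of_nonneg_right (hq x hx) (sq_nonneg (f x))]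
    have sq_le_neg_mul : f x ^ 2 ≤ -2 * (f x * g x) := by
      refine le_of_sq_le_sq ?_ (by linarith [hfg x hx])
      linarith [mul_le_mul_of_nonneg_left sq_le (sq_nonneg (f x))]
    nlinarith only [sq_le_neg_mul, hfg x hx, ha.trans hx]

end IsSchrodingerSolution

/-! ### The corrected WKB energy -/

/-- The square of the amplitude of `F` in the WKB approximation `F ≈ A R^(-1/2) cos (∫ R)` of a
solution of `F'' = -R² F` with derivative `G`. -/
def wkbEnergy (R F G : ℝ → ℝ) (s : ℝ) : ℝ := G s ^ 2 / R s + R s * F s ^ 2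

/-- The WKB energy with the correction `B F G`, `B = R' / R²`, which cancels the oscillating first
order term of the derivative. -/
def wkbCorrectedEnergy (R B F G : ℝ → ℝ) (s : ℝ) : ℝ := wkbEnergy R F G s + B s * (F s * G s)

/-- The frequency `R = √Q` varies slowly on `D`: the relative rate `B = R' / R²` is at most `1 / 2`
and decreasing. -/
structure IsSlowlyVarying (Q R B B' : ℝ → ℝ) (D : Set ℝ) : Prop where
  sq_eq : ∀ s ∈ D, R s ^ 2 = Q s
  pos : ∀ s ∈ D, 0 < R s
  rate_nonneg : ∀ s ∈ D, 0 ≤ B s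
  rate_le_half : ∀ s ∈ D, B s ≤ 1 / 2
  hasDerivAt : ∀ s ∈ D, HasDerivAt R (R s ^ 2 * B s) s
  hasDerivAt_rate : ∀ s ∈ D, HasDerivAt B (B' s) s
  rate_deriv_nonpos : ∀ s ∈ D, B' s ≤ 0

theorem wkbEnergy_nonneg {R F G : ℝ → ℝ} {s : ℝ} (hR : 0 < R s) : 0 ≤ wkbEnergy R F G s := by
  unfold wkbEnergy
  positivity

theorem abs_mul_le_wkbEnergy {R F G : ℝ → ℝ} {s : ℝ} (hR : 0 < R s) :
    |F s * G s| ≤ wkbEnergy R F G s / 2 := by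
  have sub_sq : (G s - R s * F s) ^ 2 / R s = wkbEnergy R F G s - 2 * (F s * G s) := by
    unfold wkbEnergy
    field_simp
    ring
  have add_sq : (G s + R s * F s) ^ 2 / R s = wkbEnergy R F G s + 2 * (F s * G s) := by
    unfold wkbEnergy
    field_simp
    ring
  have h_sub : 0 ≤ (G s - R s * F s) ^ 2 / R s := by positivity
  have h_add : 0 ≤ (G s + R s * F s) ^ 2 / R s := by positivity
  exact abs_le.2 ⟨by linarith, by linarith⟩

theorem abs_sub_le_of_exp_squeeze {L T E B : ℝ} (hL : 0 ≤ L) (hB : 0 ≤ B) (hB' : B ≤ 1 / 2)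
    (hE : E ≤ 2 * T) (hE0 : 0 ≤ E) (hTE : |T - E| ≤ B * (E / 2)) (lower : L ≤ T * exp B)
    (upper : T * exp (-B) ≤ L) : |E - L| ≤ 5 * L * B := by
  have hT : 0 ≤ T := by linarith
  have one_sub_le : 1 - B ≤ exp (-B) := one_sub_le_exp_neg B
  have T_upper : T * (1 - B) ≤ L := (mul_le_mul_of_nonneg_left one_sub_le hT).trans upper
  have T_lower : L * (1 - B) ≤ T := calc
    L * (1 - B) ≤ L * exp (-B) := by gcongr
    _ ≤ T * exp B * exp (-B) := by gcongr
    _ = T := by rw [mul_assoc, ← exp_add, add_neg_cancel, exp_zero, mul_one]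
  have T_le : T ≤ 2 * L := by nlinarith
  have hTB : T * B ≤ 2 * L * B := by gcongr
  have hEB : B * (E / 2) ≤ B * T := by gcongr; linarith
  rw [abs_le] at hTE ⊢
  constructor <;> nlinarith

namespace IsSlowlyVarying

variable {Q R B B' F G : ℝ → ℝ} {D : Set ℝ} {s : ℝ}

theorem abs_correctedEnergy_sub_le (h : IsSlowlyVarying Q R B B' D) (hs : s ∈ D) :
    |wkbCorrectedEnergy R B F G s - wkbEnergy R F G s| ≤ B s * (wkbEnergy R F G s / 2) := by
  rw [wkbCorrectedEnergy, add_sub_cancel_left, abs_mul, abs_of_nonneg (h.rate_nonneg s hs)]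
  exact mul_le_mul_of_nonneg_left (abs_mul_le_wkbEnergy (h.pos s hs)) (h.rate_nonneg s hs)

theorem energy_le_two_mul (h : IsSlowlyVarying Q R B B' D) (hs : s ∈ D) :
    wkbEnergy R F G s ≤ 2 * wkbCorrectedEnergy R B F G s := by
  have diff := (abs_le.1 (h.abs_correctedEnergy_sub_le (F := F) (G := G) hs)).1
  have nonneg : 0 ≤ wkbEnergy R F G s := wkbEnergy_nonneg (h.pos s hs)
  nlinarith [h.rate_le_half s hs, h.rate_nonneg s hs]

theorem hasDerivAt_correctedEnergy (h : IsSlowlyVarying Q R B B' D)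
    (sol : IsSchrodingerSolution (fun s => -Q s) F G) (hs : s ∈ D) :
    HasDerivAt (wkbCorrectedEnergy R B F G) (B' s * (F s * G s)) s := by
  have hR := h.hasDerivAt s hs
  have hR0 := (h.pos s hs).ne'
  refine (((((sol.hasDerivAt_deriv s).fun_pow 2).fun_div hR hR0).fun_add
    (hR.fun_mul ((sol.hasDerivAt s).fun_pow 2))).fun_add
    ((h.hasDerivAt_rate s hs).fun_mul (sol.hasDerivAt_mul s))).congr_deriv ?_
  rw [← h.sq_eq s hs]
  field_simp
  push_cast
  ring

theorem abs_deriv_correctedEnergy_le (h : IsSlowlyVarying Q R B B' D) (hs : s ∈ D) :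
    |B' s * (F s * G s)| ≤ -B' s * wkbCorrectedEnergy R B F G s := by
  rw [abs_mul, abs_of_nonpos (h.rate_deriv_nonpos s hs)]
  refine mul_le_mul_of_nonneg_left ?_ (neg_nonneg.2 (h.rate_deriv_nonpos s hs))
  linarith [abs_mul_le_wkbEnergy (F := F) (G := G) (h.pos s hs),
    h.energy_le_two_mul (F := F) (G := G) hs]

theorem antitoneOn_correctedEnergy_mul_exp (h : IsSlowlyVarying Q R B B' D) (hD : Convex ℝ D)
    (sol : IsSchrodingerSolution (fun s => -Q s) F G) :
    AntitoneOn (fun s => wkbCorrectedEnergy R B F G s * exp (B s)) D :=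
  antitoneOn_mul_exp hD (fun _ hs => h.hasDerivAt_correctedEnergy sol hs) h.hasDerivAt_rate
    fun s hs => by
      linarith [(abs_le.1 (h.abs_deriv_correctedEnergy_le (F := F) (G := G) hs)).2]

theorem monotoneOn_correctedEnergy_mul_exp_neg (h : IsSlowlyVarying Q R B B' D) (hD : Convex ℝ D)
    (sol : IsSchrodingerSolution (fun s => -Q s) F G) :
    MonotoneOn (fun s => wkbCorrectedEnergy R B F G s * exp (-B s)) D := by
  have anti := antitoneOn_mul_exp hD (h := fun s => -wkbCorrectedEnergy R B F G s)
    (B := fun s => -B s) (fun _ hs => (h.hasDerivAt_correctedEnergy sol hs).fun_neg)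
    (fun s hs => (h.hasDerivAt_rate s hs).fun_neg) fun s hs => by
      linarith [(abs_le.1 (h.abs_deriv_correctedEnergy_le (F := F) (G := G) hs)).1]
  simpa only [neg_mul, neg_neg] using anti.neg

theorem tendsto_correctedEnergy_mul_exp (h : IsSlowlyVarying Q R B B' D) {l : Filter ℝ} {L c : ℝ}
    (hl : ∀ᶠ t in l, t ∈ D) (hB : Tendsto B l (𝓝 0)) (hE : Tendsto (wkbEnergy R F G) l (𝓝 L)) :
    Tendsto (fun t => wkbCorrectedEnergy R B F G t * exp (c * B t)) l (𝓝 L) := by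
  have diff : Tendsto (fun t => wkbCorrectedEnergy R B F G t - wkbEnergy R F G t) l (𝓝 0) := by
    refine squeeze_zero_norm' (hl.mono fun t ht => h.abs_correctedEnergy_sub_le ht) ?_
    simpa only [zero_mul] using hB.mul (hE.div_const 2)
  have hT : Tendsto (wkbCorrectedEnergy R B F G) l (𝓝 L) := by
    simpa only [sub_add_cancel, zero_add] using diff.add hE
  simpa only [mul_zero, exp_zero, mul_one] using hT.mul (hB.const_mul c).rexp

theorem abs_wkbEnergy_sub_le_of_tendsto (h : IsSlowlyVarying Q R B B' D) (hD : Convex ℝ D)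
    (sol : IsSchrodingerSolution (fun s => -Q s) F G) (hs : s ∈ D) {l : Filter ℝ} [l.NeBot]
    {L : ℝ} (hl : ∀ᶠ t in l, t ∈ D ∧ s ≤ t) (hB : Tendsto B l (𝓝 0))
    (hE : Tendsto (wkbEnergy R F G) l (𝓝 L)) : |wkbEnergy R F G s - L| ≤ 5 * L * B s := by
  have hlD : ∀ᶠ t in l, t ∈ D := hl.mono fun _ => And.left
  have hL : 0 ≤ L := ge_of_tendsto hE (hlD.mono fun t ht => wkbEnergy_nonneg (h.pos t ht))
  refine abs_sub_le_of_exp_squeeze hL (h.rate_nonneg s hs) (h.rate_le_half s hs)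
    (h.energy_le_two_mul hs) (wkbEnergy_nonneg (h.pos s hs)) (h.abs_correctedEnergy_sub_le hs) ?_ ?_
  · refine le_of_tendsto (h.tendsto_correctedEnergy_mul_exp (c := 1) hlD hB hE) ?_
    filter_upwards [hl] with t ht
    simpa only [one_mul] using h.antitoneOn_correctedEnergy_mul_exp hD sol hs ht.1 ht.2
  · refine ge_of_tendsto (h.tendsto_correctedEnergy_mul_exp (c := -1) hlD hB hE) ?_
    filter_upwards [hl] with t ht
    simpa only [neg_one_mul] using
      h.monotoneOn_correctedEnergy_mul_exp_neg hD sol hs ht.1 ht.2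

end IsSlowlyVarying

/-! ### The soft edge equation -/

/-- The potential of the soft edge equation `f'' = (x + e² x² / 4 - e / 2) f`. The Airy function
is the case `e = 0`, and the rescaled Hermite function `ψ_n` the case `e = n^(-1/3)`. -/
def edgePotential (e x : ℝ) : ℝ := x + e ^ 2 * x ^ 2 / 4 - e / 2

/-- The local frequency of solutions of the soft edge equation at `x = -s`. -/
def edgeFrequency (e s : ℝ) : ℝ := √(-edgePotential e (-s))

/-- The rate `R' / R²` of the frequency `R = edgeFrequency e`. -/
def edgeRate (e s : ℝ) : ℝ := (1 - e ^ 2 * s / 2) / (2 * edgeFrequency e s ^ 3)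

/-- The derivative of `edgeRate e`. -/
def edgeRateDeriv (e s : ℝ) : ℝ :=
  -(e ^ 2 / (4 * edgeFrequency e s ^ 3) +
    3 * (1 - e ^ 2 * s / 2) ^ 2 / (4 * edgeFrequency e s ^ 5))

/-- The range of `s = -x` from the soft edge to the centre `2 / e²` of the spectrum; it is unbounded
for `e = 0`. -/
def edgeBulk (e : ℝ) : Set ℝ := {s | 2 ≤ s ∧ e ^ 2 * s ≤ 2}

theorem convex_edgeBulk (e : ℝ) : Convex ℝ (edgeBulk e) :=
  Set.OrdConnected.convex ⟨fun _ ha _ hb _ hc =>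
    ⟨ha.1.trans hc.1, (mul_le_mul_of_nonneg_left hc.2 (sq_nonneg e)).trans hb.2⟩⟩

theorem hasDerivAt_edgePotential (e x : ℝ) :
    HasDerivAt (edgePotential e) (1 + e ^ 2 * x / 2) x :=
  (((hasDerivAt_id x).fun_add ((((hasDerivAt_id x).fun_pow 2).const_mul (e ^ 2)).div_const
    4)).sub_const (e / 2)).congr_deriv (by simp only [id]; push_cast; ring)

section Bulk

variable {e s : ℝ}

theorem half_le_neg_edgePotential (he : 0 ≤ e) (hs : s ∈ edgeBulk e) :
    s / 2 ≤ -edgePotential e (-s) := by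
  have : 0 ≤ s * (2 - e ^ 2 * s) := mul_nonneg (by linarith [hs.1]) (by linarith [hs.2])
  unfold edgePotential
  linarith

theorem edgeFrequency_sq (he : 0 ≤ e) (hs : s ∈ edgeBulk e) :
    edgeFrequency e s ^ 2 = -edgePotential e (-s) :=
  sq_sqrt (by linarith [half_le_neg_edgePotential he hs, hs.1])

theorem one_le_edgeFrequency (he : 0 ≤ e) (hs : s ∈ edgeBulk e) : 1 ≤ edgeFrequency e s :=
  one_le_sqrt.2 (by linarith [half_le_neg_edgePotential he hs, hs.1])

theorem sqrt_le_two_mul_edgeFrequency (he : 0 ≤ e) (hs : s ∈ edgeBulk e) :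
    √s ≤ 2 * edgeFrequency e s := by
  have h1 := one_le_edgeFrequency he hs
  refine sqrt_le_iff.2 ⟨by linarith, ?_⟩
  rw [mul_pow, edgeFrequency_sq he hs]
  linarith [half_le_neg_edgePotential he hs, hs.1]

theorem edgeFrequency_sq_le (he : 0 ≤ e) (he1 : e ≤ 1) (hs : s ∈ edgeBulk e) :
    edgeFrequency e s ^ 2 ≤ s + 1 / 2 := by
  rw [edgeFrequency_sq he hs, edgePotential]
  linarith [mul_nonneg (sq_nonneg e) (sq_nonneg s)]

theorem edgeFrequency_le_two_mul_sqrt (he : 0 ≤ e) (he1 : e ≤ 1) (hs : s ∈ edgeBulk e) :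
    edgeFrequency e s ≤ 2 * √s := by
  refine le_of_sq_le_sq ?_ (by positivity)
  rw [mul_pow, sq_sqrt (by linarith [hs.1])]
  linarith [edgeFrequency_sq_le he he1 hs, hs.1]

theorem edgeRate_nonneg (he : 0 ≤ e) (hs : s ∈ edgeBulk e) : 0 ≤ edgeRate e s := by
  have := one_le_edgeFrequency he hs
  exact div_nonneg (by linarith [hs.2]) (by positivity)

theorem edgeRate_le (he : 0 ≤ e) (hs : s ∈ edgeBulk e) :
    edgeRate e s ≤ 1 / (2 * edgeFrequency e s ^ 3) := by
  have := one_le_edgeFrequency he hs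
  have : 0 ≤ e ^ 2 * s := mul_nonneg (sq_nonneg e) (by linarith [hs.1])
  unfold edgeRate
  gcongr
  linarith

theorem edgeRate_le_half (he : 0 ≤ e) (hs : s ∈ edgeBulk e) : edgeRate e s ≤ 1 / 2 := by
  refine (edgeRate_le he hs).trans (one_div_le_one_div_of_le two_pos ?_)
  linarith [one_le_pow₀ (one_le_edgeFrequency he hs) (n := 3)]

theorem edgeRate_le_two_div (he : 0 ≤ e) (hs : s ∈ edgeBulk e) :
    edgeRate e s ≤ 2 / (s * √s) := by
  have hs0 : 0 < s := by linarith [hs.1]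
  have freq_pos : 0 < edgeFrequency e s := one_pos.trans_le (one_le_edgeFrequency he hs)
  have freq_cube : s * √s ≤ 4 * edgeFrequency e s ^ 3 := calc
    s * √s ≤ 2 * edgeFrequency e s ^ 2 * (2 * edgeFrequency e s) := by
      gcongr
      · linarith [edgeFrequency_sq he hs, half_le_neg_edgePotential he hs]
      · exact sqrt_le_two_mul_edgeFrequency he hs
    _ = 4 * edgeFrequency e s ^ 3 := by ring
  refine (edgeRate_le he hs).trans ?_
  rw [div_le_div_iff₀ (by positivity) (by positivity)]
  linarith

theorem hasDerivAt_edgeFrequency (he : 0 ≤ e) (hs : s ∈ edgeBulk e) :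
    HasDerivAt (edgeFrequency e) ((1 - e ^ 2 * s / 2) / (2 * edgeFrequency e s)) s := by
  have hpos : 0 < -edgePotential e (-s) := by linarith [half_le_neg_edgePotential he hs, hs.1]
  have hQ : HasDerivAt (fun s => -edgePotential e (-s)) (1 - e ^ 2 * s / 2) s :=
    ((hasDerivAt_edgePotential e (-s)).comp s (hasDerivAt_neg s)).fun_neg.congr_deriv (by ring)
  exact hQ.sqrt hpos.ne'

theorem hasDerivAt_edgeRate (he : 0 ≤ e) (hs : s ∈ edgeBulk e) :
    HasDerivAt (edgeRate e) (edgeRateDeriv e s) s := by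
  have freq_pos : 0 < edgeFrequency e s := one_pos.trans_le (one_le_edgeFrequency he hs)
  have hnum : HasDerivAt (fun s => 1 - e ^ 2 * s / 2) (-(e ^ 2 / 2)) s :=
    ((((hasDerivAt_id s).const_mul (e ^ 2)).div_const 2).const_sub 1).congr_deriv (by ring)
  refine (hnum.fun_div (((hasDerivAt_edgeFrequency he hs).fun_pow 3).const_mul 2)
    (by positivity)).congr_deriv ?_
  unfold edgeRateDeriv
  field_simp
  push_cast
  ring

theorem isSlowlyVarying_edgeFrequency (he : 0 ≤ e) :
    IsSlowlyVarying (fun s => -edgePotential e (-s)) (edgeFrequency e) (edgeRate e)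
      (edgeRateDeriv e) (edgeBulk e) where
  sq_eq _ := edgeFrequency_sq he
  pos _ hs := one_pos.trans_le (one_le_edgeFrequency he hs)
  rate_nonneg _ := edgeRate_nonneg he
  rate_le_half _ := edgeRate_le_half he
  hasDerivAt s hs := by
    have freq_pos : 0 < edgeFrequency e s := one_pos.trans_le (one_le_edgeFrequency he hs)
    refine (hasDerivAt_edgeFrequency he hs).congr_deriv ?_
    unfold edgeRate
    field_simp
  hasDerivAt_rate _ := hasDerivAt_edgeRate he
  rate_deriv_nonpos s hs := by
    have freq_pos : 0 < edgeFrequency e s := one_pos.trans_le (one_le_edgeFrequency he hs)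
    exact neg_nonpos.2 (by positivity)

end Bulk

/-- The one-point function built from a solution `f` of the soft edge equation and `g = f'`. -/
def edgeDensity (e : ℝ) (f g : ℝ → ℝ) (x : ℝ) : ℝ := g x ^ 2 - (x + e ^ 2 * x ^ 2 / 4) * f x ^ 2

/-- The limiting density near the soft edge: the semicircle of radius `2 / e²`, or the
square root `√(-x) / π` for `e = 0`. -/
def semicircleEdge (e x : ℝ) : ℝ := if x < 0 then √(-x * (1 + e ^ 2 * x / 4)) / π else 0

/-- The WKB energy at `-s` of a solution `f` of the soft edge equation, with `g = f'`. -/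
def edgeEnergy (e : ℝ) (f g : ℝ → ℝ) (s : ℝ) : ℝ :=
  wkbEnergy (edgeFrequency e) (fun s => f (-s)) (fun s => -g (-s)) s

theorem semicircleEdge_nonneg (e x : ℝ) : 0 ≤ semicircleEdge e x := by
  unfold semicircleEdge
  split_ifs <;> positivity

theorem div_pi_le_self {y : ℝ} (hy : 0 ≤ y) : y / π ≤ y :=
  div_le_self hy (by linarith [pi_gt_three])

theorem semicircleEdge_le_sqrt_abs (e x : ℝ) : semicircleEdge e x ≤ √|x| := by
  unfold semicircleEdge
  split_ifs with h
  · refine (div_pi_le_self (sqrt_nonneg _)).trans (sqrt_le_sqrt ?_)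
    rw [abs_of_neg h]
    linarith [mul_nonneg (sq_nonneg e) (sq_nonneg x)]
  · exact sqrt_nonneg _

section Comparison

variable {e K s : ℝ} {f g F G : ℝ → ℝ}

theorem IsSchrodingerSolution.abs_edgeEnergy_sub_le_of_tendsto
    (sol : IsSchrodingerSolution (edgePotential e) f g) (he : 0 ≤ e) (hs : s ∈ edgeBulk e)
    {l : Filter ℝ} [l.NeBot] {L : ℝ} (hl : ∀ᶠ t in l, t ∈ edgeBulk e ∧ s ≤ t)
    (hB : Tendsto (edgeRate e) l (𝓝 0)) (hE : Tendsto (edgeEnergy e f g) l (𝓝 L)) :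
    |edgeEnergy e f g s - L| ≤ 10 * L / (s * √s) := by
  have slow := isSlowlyVarying_edgeFrequency he
  have hL : 0 ≤ L := ge_of_tendsto hE
    (hl.mono fun t ht => wkbEnergy_nonneg (slow.pos t ht.1))
  calc |edgeEnergy e f g s - L| ≤ 5 * L * edgeRate e s :=
        slow.abs_wkbEnergy_sub_le_of_tendsto (convex_edgeBulk e)
          (by simpa only [neg_neg] using sol.comp_neg) hs hl hB hE
    _ ≤ 5 * L * (2 / (s * √s)) := by gcongr; exact edgeRate_le_two_div he hs
    _ = 10 * L / (s * √s) := by ring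

theorem one_le_mul_sqrt (hs : 2 ≤ s) : 1 ≤ s * √s :=
  one_le_mul_of_one_le_of_one_le (by linarith) (one_le_sqrt.2 (by linarith))

theorem mul_sqrt_le_two (hs : s ∈ edgeBulk e) : e * √s ≤ 2 := by
  have hs0 : 0 ≤ s := by linarith [hs.1]
  refine le_of_sq_le_sq ?_ zero_le_two
  rw [mul_pow, sq_sqrt hs0]
  linarith [hs.2]

theorem half_mul_sq_le_wkbEnergy_div (he : 0 ≤ e) (hs : s ∈ edgeBulk e) :
    e / 2 * F s ^ 2 ≤ 2 * wkbEnergy (edgeFrequency e) F G s / s := by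
  have hs0 : 0 < s := by linarith [hs.1]
  have freq_pos : 0 < edgeFrequency e s := one_pos.trans_le (one_le_edgeFrequency he hs)
  have : 0 ≤ G s ^ 2 / edgeFrequency e s := by positivity
  rw [le_div_iff₀ hs0]
  calc e / 2 * F s ^ 2 * s = e * √s * (√s * F s ^ 2) / 2 := by
        linear_combination (-e / 2 * F s ^ 2) * sq_sqrt hs0.le
    _ ≤ 2 * (2 * edgeFrequency e s * F s ^ 2) / 2 := by
        gcongr
        · exact mul_sqrt_le_two hs
        · exact sqrt_le_two_mul_edgeFrequency he hs
    _ ≤ 2 * wkbEnergy (edgeFrequency e) F G s := by unfold wkbEnergy; linarith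

theorem abs_edgeFrequency_sub_sqrt_le (he : 0 ≤ e) (hs : s ∈ edgeBulk e) :
    |edgeFrequency e s - √(s - e ^ 2 * s ^ 2 / 4)| ≤ 2 / s := by
  have hs0 : 0 < s := by linarith [hs.1]
  have hV : 0 ≤ s - e ^ 2 * s ^ 2 / 4 := by
    linarith [mul_nonneg hs0.le (sub_nonneg.2 hs.2)]
  have freq_sq : edgeFrequency e s ^ 2 = s - e ^ 2 * s ^ 2 / 4 + e / 2 := by
    rw [edgeFrequency_sq he hs, edgePotential]
    ring
  have hσ := sqrt_le_two_mul_edgeFrequency he hs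
  have hσ2 := sq_sqrt hs0.le
  have hW := sq_sqrt hV
  have hW0 := sqrt_nonneg (s - e ^ 2 * s ^ 2 / 4)
  have hR := one_le_edgeFrequency he hs
  set R := edgeFrequency e s
  set W := √(s - e ^ 2 * s ^ 2 / 4)
  have sub_nonneg : 0 ≤ R - W := by
    rw [sub_nonneg]
    exact le_of_sq_le_sq (by linarith) (by linarith)
  have sub_mul_freq : (R - W) * R ≤ e / 2 := by nlinarith [mul_nonneg sub_nonneg hW0]
  rw [abs_of_nonneg sub_nonneg, le_div_iff₀ hs0]
  calc (R - W) * s = (R - W) * √s * √s := by linear_combination (W - R) * hσ2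
    _ ≤ e * √s := by gcongr; nlinarith
    _ ≤ 2 := mul_sqrt_le_two hs

theorem abs_add_mul_sub_sqrt_le (he : 0 ≤ e) (he1 : e ≤ 1) (hs : s ∈ edgeBulk e)
    (hE : |wkbEnergy (edgeFrequency e) F G s - 1 / π| ≤ K / (s * √s)) :
    |G s ^ 2 + (s - e ^ 2 * s ^ 2 / 4) * F s ^ 2 - √(s - e ^ 2 * s ^ 2 / 4) / π|
      ≤ (4 * K + 4) / s := by
  have hs0 : 0 < s := by linarith [hs.1]
  have freq_pos : 0 < edgeFrequency e s := one_pos.trans_le (one_le_edgeFrequency he hs)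
  have hK : 0 ≤ K := by
    have := (abs_nonneg _).trans hE
    rwa [le_div_iff₀ (by positivity), zero_mul] at this
  have energy_le : wkbEnergy (edgeFrequency e) F G s ≤ 1 + K := by
    linarith [(abs_le.1 hE).2, div_le_self hK (one_le_mul_sqrt hs.1), div_pi_le_self zero_le_one]
  have main_term : |edgeFrequency e s * (wkbEnergy (edgeFrequency e) F G s - 1 / π)|
      ≤ 2 * K / s := by
    rw [abs_mul, abs_of_pos freq_pos]
    calc _ ≤ 2 * √s * (K / (s * √s)) := by
          gcongr
          exact edgeFrequency_le_two_mul_sqrt he he1 hs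
      _ = 2 * K / s := by field_simp
  have shift_term : |e / 2 * F s ^ 2| ≤ 2 * (1 + K) / s := by
    rw [abs_of_nonneg (by positivity)]
    exact (half_mul_sq_le_wkbEnergy_div he hs).trans (by gcongr)
  have sqrt_term : |(edgeFrequency e s - √(s - e ^ 2 * s ^ 2 / 4)) / π| ≤ 2 / s := by
    rw [abs_div, abs_of_pos pi_pos]
    exact (div_pi_le_self (abs_nonneg _)).trans (abs_edgeFrequency_sub_sqrt_le he hs)
  have decomposition : G s ^ 2 + (s - e ^ 2 * s ^ 2 / 4) * F s ^ 2 - √(s - e ^ 2 * s ^ 2 / 4) / π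
      = edgeFrequency e s * (wkbEnergy (edgeFrequency e) F G s - 1 / π) - e / 2 * F s ^ 2
        + (edgeFrequency e s - √(s - e ^ 2 * s ^ 2 / 4)) / π := by
    have freq_sq := edgeFrequency_sq he hs
    unfold edgePotential at freq_sq
    have energy_mul : edgeFrequency e s * wkbEnergy (edgeFrequency e) F G s
        = G s ^ 2 + edgeFrequency e s ^ 2 * F s ^ 2 := by
      unfold wkbEnergy
      field_simp
    linear_combination -energy_mul - F s ^ 2 * freq_sq
  calc _ ≤ 2 * K / s + 2 * (1 + K) / s + 2 / s := by
        rw [decomposition]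
        exact (abs_add_le _ _).trans (add_le_add ((abs_sub _ _).trans
          (add_le_add main_term shift_term)) sqrt_term)
    _ = (4 * K + 4) / s := by ring

end Comparison

/-- A decaying solution of the soft edge equation, normalized so that its WKB energy is
`1 / π + O(s^(-3/2))` with constant `K`. -/
structure IsNormalizedEdgeSolution (K e : ℝ) (f g : ℝ → ℝ) : Prop
    extends IsSchrodingerSolution (edgePotential e) f g where
  nonneg : 0 ≤ e
  le_one : e ≤ 1
  tendsto_zero : Tendsto f atTop (𝓝 0)
  tendsto_deriv_zero : Tendsto g atTop (𝓝 0)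
  tendsto_id_mul_zero : Tendsto (fun x => x * f x) atTop (𝓝 0)
  abs_energy_sub_le : ∀ s ∈ edgeBulk e, |edgeEnergy e f g s - 1 / π| ≤ K / (s * √s)

/-- A bound for `f² + f'²` on `[-2, 1]`, for solutions normalized with constant `K`. -/
def edgeMidConst (K : ℝ) : ℝ := 2 * (1 + K) * exp 9

/-- The constant in the comparison of `edgeDensity` with `semicircleEdge`. -/
def edgeConst (K : ℝ) : ℝ := 6 * edgeMidConst K + 4 * K + 10

theorem edgeConst_nonneg {K : ℝ} (hK : 0 ≤ K) : 0 ≤ edgeConst K := by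
  unfold edgeConst edgeMidConst
  positivity

namespace IsNormalizedEdgeSolution

variable {K e : ℝ} {f g : ℝ → ℝ} {x : ℝ}

theorem two_mem_edgeBulk (h : IsNormalizedEdgeSolution K e f g) : 2 ∈ edgeBulk e :=
  ⟨le_rfl, by nlinarith [h.nonneg, h.le_one]⟩

theorem const_nonneg (h : IsNormalizedEdgeSolution K e f g) : 0 ≤ K := by
  have := (abs_nonneg _).trans (h.abs_energy_sub_le 2 h.two_mem_edgeBulk)
  rwa [le_div_iff₀ (by positivity), zero_mul] at this

theorem edgeMidConst_nonneg (h : IsNormalizedEdgeSolution K e f g) : 0 ≤ edgeMidConst K := by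
  have := h.const_nonneg
  unfold edgeMidConst
  positivity

theorem sq_add_sq_neg_two_le (h : IsNormalizedEdgeSolution K e f g) :
    f (-2) ^ 2 + g (-2) ^ 2 ≤ 2 * (1 + K) := by
  have freq_ge := one_le_edgeFrequency h.nonneg h.two_mem_edgeBulk
  have freq_le : edgeFrequency e 2 ≤ 2 :=
    le_of_sq_le_sq (by linarith [edgeFrequency_sq_le h.nonneg h.le_one h.two_mem_edgeBulk])
      zero_le_two
  have energy_le : edgeEnergy e f g 2 ≤ 1 + K := by
    linarith [(abs_le.1 (h.abs_energy_sub_le 2 h.two_mem_edgeBulk)).2,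
      div_le_self h.const_nonneg (one_le_mul_sqrt le_rfl), div_pi_le_self zero_le_one]
  have deriv_part : (-g (-2)) ^ 2 / 2 ≤ (-g (-2)) ^ 2 / edgeFrequency e 2 := by gcongr
  have value_part : 1 * f (-2) ^ 2 ≤ edgeFrequency e 2 * f (-2) ^ 2 := by gcongr
  rw [edgeEnergy, wkbEnergy] at energy_le
  linarith [sq_nonneg (f (-2))]

theorem sq_add_sq_le (h : IsNormalizedEdgeSolution K e f g) (hx : x ∈ Icc (-2) 1) :
    f x ^ 2 + g x ^ 2 ≤ edgeMidConst K := by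
  have potential_le : ∀ y ∈ Icc (-2 : ℝ) 1, |1 + edgePotential e y| ≤ 3 := fun y hy => by
    have he := h.nonneg
    have he1 := h.le_one
    have : e ^ 2 * y ^ 2 ≤ 1 * 4 := by gcongr <;> nlinarith [hy.1, hy.2]
    have : 0 ≤ e ^ 2 * y ^ 2 := by positivity
    unfold edgePotential
    exact abs_le.2 ⟨by linarith [hy.1], by linarith [hy.2]⟩
  have hK := h.const_nonneg
  calc f x ^ 2 + g x ^ 2 ≤ (f (-2) ^ 2 + g (-2) ^ 2) * exp (3 * (x - -2)) :=
        h.sq_add_sq_le_mul_exp potential_le hx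
    _ ≤ 2 * (1 + K) * exp 9 := by
        gcongr
        · exact h.sq_add_sq_neg_two_le
        · linarith [hx.2]

theorem abs_edgeDensity_le_of_mem_Icc (h : IsNormalizedEdgeSolution K e f g)
    (hx : x ∈ Icc (-2) 1) : |edgeDensity e f g x| ≤ 3 * edgeMidConst K := by
  have he := h.nonneg
  have he1 := h.le_one
  have : e ^ 2 * x ^ 2 ≤ 1 * 4 := by gcongr <;> nlinarith [hx.1, hx.2]
  have : 0 ≤ e ^ 2 * x ^ 2 := by positivity
  have potential_le : |x + e ^ 2 * x ^ 2 / 4| ≤ 3 :=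
    abs_le.2 ⟨by linarith [hx.1], by linarith [hx.2]⟩
  calc |edgeDensity e f g x| ≤ |g x ^ 2| + |(x + e ^ 2 * x ^ 2 / 4) * f x ^ 2| := abs_sub _ _
    _ ≤ 3 * g x ^ 2 + 3 * f x ^ 2 := by
        rw [abs_mul, abs_of_nonneg (sq_nonneg (g x)), abs_of_nonneg (sq_nonneg (f x))]
        gcongr
        linarith [sq_nonneg (g x)]
    _ ≤ 3 * edgeMidConst K := by linarith [h.sq_add_sq_le hx]

theorem tendsto_energy (h : IsNormalizedEdgeSolution K e f g) :
    Tendsto (fun x => g x ^ 2 - edgePotential e x * f x ^ 2) atTop (𝓝 0) := by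
  have hf := h.tendsto_zero
  have hg := h.tendsto_deriv_zero
  have hxf := h.tendsto_id_mul_zero
  have := (hg.mul hg).sub (((hxf.mul hf).add ((hxf.mul hxf).const_mul (e ^ 2 / 4))).sub
    ((hf.mul hf).const_mul (e / 2)))
  simp only [mul_zero, add_zero, sub_zero] at this
  refine this.congr fun x => ?_
  unfold edgePotential
  ring

theorem abs_edgeDensity_le_of_one_le (h : IsNormalizedEdgeSolution K e f g) (hx : 1 ≤ x) :
    |edgeDensity e f g x| ≤ 2 * edgeMidConst K / x := by
  have he := h.nonneg
  have he1 := h.le_one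
  have potential_ge : ∀ y ∈ Ici (1 : ℝ), 1 / 2 ≤ edgePotential e y := fun y hy => by
    have : 0 ≤ e ^ 2 * y ^ 2 := by positivity
    unfold edgePotential
    linarith [mem_Ici.1 hy]
  have potential_deriv : ∀ y ∈ Ici (1 : ℝ), 0 ≤ 1 + e ^ 2 * y / 2 := fun y hy => by
    have : 0 ≤ y := zero_le_one.trans hy
    positivity
  have potential_nonneg : ∀ y ∈ Ici (1 : ℝ), 0 ≤ edgePotential e y := fun y hy => by
    linarith [potential_ge y hy]
  have energy_nonneg :=
    h.energy_nonneg (fun y _ => hasDerivAt_edgePotential e y) potential_deriv h.tendsto_energy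
  have mul_nonpos := h.mul_deriv_nonpos potential_nonneg
    (by simpa only [mul_zero] using h.tendsto_zero.mul h.tendsto_deriv_zero)
  have energy_bound := h.antitoneOn_id_mul_energy_sub zero_le_one
    (fun y _ => hasDerivAt_edgePotential e y) potential_deriv potential_nonneg
    self_mem_Ici hx hx
  have sq_bound := h.antitoneOn_id_mul_sq le_rfl
    (fun y hy => by linarith [potential_ge y hy]) energy_nonneg mul_nonpos self_mem_Ici hx hx
  have density_eq : edgeDensity e f g x
      = (g x ^ 2 - edgePotential e x * f x ^ 2) - e / 2 * f x ^ 2 := by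
    unfold edgeDensity edgePotential
    ring
  have shift_le : e / 2 * f x ^ 2 ≤ 1 * f x ^ 2 := by gcongr; linarith
  have shift_nonneg : 0 ≤ e / 2 * f x ^ 2 := by positivity
  have density_le : |edgeDensity e f g x|
      ≤ (g x ^ 2 - edgePotential e x * f x ^ 2) + f x ^ 2 := by
    rw [density_eq]
    exact abs_le.2 ⟨by linarith [energy_nonneg x hx], by linarith [sq_nonneg (f x)]⟩
  have value_one := h.sq_add_sq_le (x := 1) ⟨by norm_num, le_rfl⟩
  have potential_one : 0 ≤ edgePotential e 1 * f 1 ^ 2 :=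
    mul_nonneg (potential_nonneg 1 self_mem_Ici) (sq_nonneg _)
  rw [le_div_iff₀ (by linarith)]
  have := mul_le_mul_of_nonneg_right density_le (zero_le_one.trans hx)
  linarith [mul_nonpos x hx, sq_nonneg (f 1 + g 1), sq_nonneg (g 1), sq_nonneg (f 1)]

theorem abs_edgeDensity_sub_le_of_le_neg_two (h : IsNormalizedEdgeSolution K e f g)
    (hx : x ≤ -2) (hex : e ^ 2 * -x ≤ 2) :
    |edgeDensity e f g x - semicircleEdge e x| ≤ (4 * K + 4) / |x| := by
  have mem : -x ∈ edgeBulk e := ⟨by linarith, hex⟩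
  have hx0 : x < 0 := by linarith
  convert abs_add_mul_sub_sqrt_le h.nonneg h.le_one mem (h.abs_energy_sub_le _ mem) using 2
  · have radicand : -x * (1 + e ^ 2 * x / 4) = -x - e ^ 2 * (-x) ^ 2 / 4 := by ring
    rw [semicircleEdge, if_pos hx0, radicand, edgeDensity]
    simp only [neg_neg]
    ring
  · exact abs_of_neg hx0

theorem abs_edgeDensity_sub_semicircleEdge_le (h : IsNormalizedEdgeSolution K e f g)
    (hx : x ≠ 0) (hex : e ^ 2 * -x ≤ 2) :
    |edgeDensity e f g x - semicircleEdge e x| ≤ edgeConst K / |x| := by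
  have hK := h.const_nonneg
  have hM := h.edgeMidConst_nonneg
  have hx0 : 0 < |x| := abs_pos.2 hx
  unfold edgeConst
  rcases le_total x (-2) with left | hl
  · exact (h.abs_edgeDensity_sub_le_of_le_neg_two left hex).trans (by gcongr <;> linarith)
  rcases le_total x 1 with mid | right
  · have abs_le_two : |x| ≤ 2 := abs_le.2 ⟨hl, by linarith⟩
    have semicircle_le : |semicircleEdge e x| ≤ 2 := by
      rw [abs_of_nonneg (semicircleEdge_nonneg e x)]
      exact (semicircleEdge_le_sqrt_abs e x).trans (sqrt_le_iff.2 ⟨by norm_num, by linarith⟩)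
    rw [le_div_iff₀ hx0]
    calc _ ≤ (3 * edgeMidConst K + 2) * 2 := by
          gcongr
          exact (abs_sub _ _).trans
            (add_le_add (h.abs_edgeDensity_le_of_mem_Icc ⟨hl, mid⟩) semicircle_le)
      _ ≤ _ := by linarith
  · rw [semicircleEdge, if_neg (by linarith), sub_zero, abs_of_pos (by linarith : 0 < x)]
    exact (h.abs_edgeDensity_le_of_one_le right).trans (by gcongr; linarith)

theorem edgeDensity_le (h : IsNormalizedEdgeSolution K e f g) (hex : e ^ 2 * -x ≤ 2) :
    edgeDensity e f g x ≤ (edgeConst K + 1) * √(|x| + 1) := by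
  have hK := h.const_nonneg
  have hM := h.edgeMidConst_nonneg
  have one_le : 1 ≤ √(|x| + 1) := one_le_sqrt.2 (by linarith [abs_nonneg x])
  have hC := edgeConst_nonneg hK
  rcases le_total |x| 1 with small | large
  · have := le_of_abs_le (h.abs_edgeDensity_le_of_mem_Icc
      ⟨by linarith [(abs_le.1 small).1], (abs_le.1 small).2⟩)
    have : 3 * edgeMidConst K ≤ edgeConst K := by unfold edgeConst; linarith
    nlinarith
  · have hx : x ≠ 0 := abs_pos.1 (by linarith)
    have diff := le_of_abs_le (h.abs_edgeDensity_sub_semicircleEdge_le hx hex)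
    have semicircle := (semicircleEdge_le_sqrt_abs e x).trans
      (sqrt_le_sqrt (le_add_of_nonneg_right zero_le_one))
    nlinarith [div_le_self hC large]

end IsNormalizedEdgeSolution

/-! ### Oscillator functions -/

theorem hermiteP_eq_aeval (m : ℕ) (x : ℝ) :
    hermiteP m x = Polynomial.aeval x (Polynomial.hermite m) := by
  have gaussian : (fun t : ℝ => exp (-t ^ 2 / 2)) = fun t => exp (-(t ^ 2 / 2)) := by
    funext t; rw [neg_div]
  rw [hermiteP, Polynomial.hermite_eq_deriv_gaussian', iteratedDeriv_eq_iterate, gaussian]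
  ring

theorem derivative_hermite_succ (m : ℕ) :
    Polynomial.derivative (Polynomial.hermite (m + 1)) =
      ((m : Polynomial ℤ) + 1) * Polynomial.hermite m := by
  induction m with
  | zero => simp
  | succ m ih =>
    have h : Polynomial.derivative (Polynomial.hermite m) =
        Polynomial.X * Polynomial.hermite m - Polynomial.hermite (m + 1) := by
      rw [Polynomial.hermite_succ m]; ring
    rw [Polynomial.hermite_succ (m + 1), Polynomial.derivative_sub, Polynomial.derivative_mul, ih,
      Polynomial.derivative_mul, Polynomial.derivative_X, h]
    simp only [Polynomial.derivative_add, Polynomial.derivative_natCast, Polynomial.derivative_one]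
    push_cast
    ring

theorem hermiteP_zero (x : ℝ) : hermiteP 0 x = 1 := by
  simp [hermiteP_eq_aeval]

theorem hermiteP_one (x : ℝ) : hermiteP 1 x = x := by
  simp [hermiteP_eq_aeval]

theorem hermiteP_add_two (m : ℕ) (x : ℝ) :
    hermiteP (m + 2) x = x * hermiteP (m + 1) x - (m + 1) * hermiteP m x := by
  simp only [hermiteP_eq_aeval]
  rw [Polynomial.hermite_succ (m + 1), derivative_hermite_succ]
  simp

theorem hasDerivAt_hermiteP (m : ℕ) (x : ℝ) :
    HasDerivAt (hermiteP m) (x * hermiteP m x - hermiteP (m + 1) x) x := by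
  have h := (Polynomial.hermite m).hasDerivAt_aeval x
  rw [funext (hermiteP_eq_aeval m), hermiteP_eq_aeval (m + 1), Polynomial.hermite_succ]
  exact h.congr_deriv (by simp)

theorem hermiteP_neg (m : ℕ) (x : ℝ) : hermiteP m (-x) = (-1) ^ m * hermiteP m x := by
  induction m using Nat.twoStepInduction with
  | zero => simp [hermiteP_zero]
  | one => simp [hermiteP_one]
  | more m ih ih_succ =>
    rw [hermiteP_add_two, hermiteP_add_two, ih, ih_succ]
    ring

/-- The normalizing constant of the oscillator function `osc m`. -/
def oscNorm (m : ℕ) : ℝ := (2 * π) ^ (-(1 : ℝ) / 4) * (m.factorial : ℝ) ^ (-(1 : ℝ) / 2)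

theorem oscNorm_eq_sqrt_mul (m : ℕ) : oscNorm m = √(m + 1) * oscNorm (m + 1) := by
  have root : √((m : ℝ) + 1) * ((m : ℝ) + 1) ^ (-(1 : ℝ) / 2) = 1 := by
    rw [sqrt_eq_rpow, ← rpow_add (by positivity)]
    norm_num
  have factorial : ((m + 1).factorial : ℝ) ^ (-(1 : ℝ) / 2) =
      ((m : ℝ) + 1) ^ (-(1 : ℝ) / 2) * (m.factorial : ℝ) ^ (-(1 : ℝ) / 2) := by
    rw [Nat.factorial_succ, Nat.cast_mul, Nat.cast_add_one,
      mul_rpow (by positivity) (by positivity)]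
  rw [oscNorm, oscNorm, factorial]
  linear_combination -((2 * π) ^ (-(1 : ℝ) / 4) * (m.factorial : ℝ) ^ (-(1 : ℝ) / 2)) * root

theorem osc_eq (m : ℕ) (x : ℝ) : osc m x = oscNorm m * (exp (-x ^ 2 / 4) * hermiteP m x) := by
  rw [osc, oscNorm]; ring

/-- The derivative of `osc m`, expressed through the raising operator. -/
def oscDeriv (m : ℕ) (x : ℝ) : ℝ := x / 2 * osc m x - √(m + 1) * osc (m + 1) x

theorem sqrt_mul_osc_succ (m : ℕ) (x : ℝ) :
    √(m + 1) * osc (m + 1) x = oscNorm m * (exp (-x ^ 2 / 4) * hermiteP (m + 1) x) := by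
  rw [osc_eq, oscNorm_eq_sqrt_mul m]; ring

theorem sqrt_mul_osc_add_two (m : ℕ) (x : ℝ) :
    √(m + 2) * osc (m + 2) x = x * osc (m + 1) x - √(m + 1) * osc m x := by
  have root : √((m : ℝ) + 1) ^ 2 = m + 1 := sq_sqrt (by positivity)
  have h := sqrt_mul_osc_succ (m + 1) x
  rw [hermiteP_add_two, show ((m + 1 : ℕ) : ℝ) + 1 = m + 2 by push_cast; ring] at h
  rw [h, osc_eq, osc_eq, oscNorm_eq_sqrt_mul m]
  linear_combination oscNorm (m + 1) * exp (-x ^ 2 / 4) * hermiteP m x * root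

theorem hasDerivAt_osc (m : ℕ) (x : ℝ) : HasDerivAt (osc m) (oscDeriv m x) x := by
  have gaussian : HasDerivAt (fun t : ℝ => exp (-t ^ 2 / 4)) (exp (-x ^ 2 / 4) * (-x / 2)) x :=
    ((((hasDerivAt_id x).fun_pow 2).fun_neg.div_const 4).exp).congr_deriv (by
      simp only [id]; push_cast; ring)
  rw [funext (osc_eq m), oscDeriv, osc_eq, sqrt_mul_osc_succ]
  exact ((gaussian.fun_mul (hasDerivAt_hermiteP m x)).const_mul (oscNorm m)).congr_deriv (by ring)

theorem oscDeriv_succ (m : ℕ) (x : ℝ) :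
    oscDeriv (m + 1) x = √(m + 1) * osc m x - x / 2 * osc (m + 1) x := by
  have h := sqrt_mul_osc_add_two m x
  rw [oscDeriv, show ((m + 1 : ℕ) : ℝ) + 1 = m + 2 by push_cast; ring, h]
  ring

theorem hasDerivAt_oscDeriv (m : ℕ) (x : ℝ) :
    HasDerivAt (oscDeriv m) ((x ^ 2 / 4 - m - 1 / 2) * osc m x) x := by
  have root : √((m : ℝ) + 1) ^ 2 = m + 1 := sq_sqrt (by positivity)
  refine ((((hasDerivAt_id x).div_const 2).fun_mul (hasDerivAt_osc m x)).fun_sub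
    ((hasDerivAt_osc (m + 1) x).const_mul √((m : ℝ) + 1))).congr_deriv ?_
  rw [oscDeriv_succ, oscDeriv]
  simp only [id]
  linear_combination -osc m x * root

theorem osc_neg (m : ℕ) (x : ℝ) : osc m (-x) = (-1) ^ m * osc m x := by
  rw [osc_eq, osc_eq, hermiteP_neg, neg_sq]
  ring

theorem oscDeriv_neg (m : ℕ) (x : ℝ) : oscDeriv m (-x) = -((-1) ^ m * oscDeriv m x) := by
  rw [oscDeriv, oscDeriv, osc_neg, osc_neg]
  ring

theorem tendsto_gaussian_mul_eval (P : Polynomial ℝ) :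
    Tendsto (fun x => exp (-x ^ 2 / 4) * P.eval x) atTop (𝓝 0) := by
  have h := P.tendsto_div_exp_atTop.abs.const_mul (exp 1)
  simp only [abs_zero, mul_zero] at h
  refine squeeze_zero_norm (fun x => ?_) h
  calc ‖exp (-x ^ 2 / 4) * P.eval x‖ = exp (-x ^ 2 / 4) * |P.eval x| := by
        rw [norm_mul, norm_eq_abs, norm_eq_abs, abs_exp]
    _ ≤ exp (1 - x) * |P.eval x| := by
        gcongr
        nlinarith [sq_nonneg (x - 2)]
    _ = exp 1 * |P.eval x / exp x| := by
        rw [exp_sub, abs_div, abs_exp]; ring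

theorem tendsto_eval_mul_osc (P : Polynomial ℝ) (m : ℕ) :
    Tendsto (fun x => P.eval x * osc m x) atTop (𝓝 0) := by
  have h := (tendsto_gaussian_mul_eval
    (P * (Polynomial.hermite m).map (Int.castRingHom ℝ))).const_mul (oscNorm m)
  rw [mul_zero] at h
  refine h.congr fun x => ?_
  rw [osc_eq, hermiteP_eq_aeval, Polynomial.aeval_def, Polynomial.eval_mul, Polynomial.eval_map]
  simp only [algebraMap_int_eq]
  ring

theorem tendsto_osc (m : ℕ) : Tendsto (osc m) atTop (𝓝 0) := by
  simpa using tendsto_eval_mul_osc 1 m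

theorem tendsto_id_mul_osc (m : ℕ) : Tendsto (fun x => x * osc m x) atTop (𝓝 0) := by
  simpa using tendsto_eval_mul_osc Polynomial.X m

theorem tendsto_oscDeriv (m : ℕ) : Tendsto (oscDeriv m) atTop (𝓝 0) := by
  have h := ((tendsto_id_mul_osc m).const_mul (1 / 2)).sub
    ((tendsto_osc (m + 1)).const_mul √((m : ℝ) + 1))
  simp only [mul_zero, sub_zero] at h
  exact h.congr fun x => by rw [oscDeriv]; ring

/-! ### The energy of the oscillator functions at the origin -/

theorem osc_two_mul_add_one_zero (m : ℕ) : osc (2 * m + 1) 0 = 0 := by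
  have h := osc_neg (2 * m + 1) 0
  rw [neg_zero, (odd_two_mul_add_one m).neg_one_pow] at h
  linarith

theorem osc_add_two_zero_sq (m : ℕ) :
    (m + 2) * osc (m + 2) 0 ^ 2 = (m + 1) * osc m 0 ^ 2 := by
  have h := congrArg (· ^ 2) (sqrt_mul_osc_add_two m 0)
  simp only [zero_mul, zero_sub, neg_sq, mul_pow] at h
  rwa [sq_sqrt (by positivity), sq_sqrt (by positivity)] at h

theorem osc_two_mul_zero_pow_four_mul_wallis (m : ℕ) :
    osc (2 * m) 0 ^ 4 * (Wallis.W m * (2 * m + 1)) * (2 * π) = 1 := by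
  induction m with
  | zero =>
    have root : ((2 * π) ^ (-(1 : ℝ) / 4)) ^ 4 = (2 * π)⁻¹ := by
      rw [← rpow_mul_natCast (by positivity)]
      norm_num [rpow_neg_one]
    have value : osc 0 0 ^ 4 = (2 * π)⁻¹ := by simp [osc_eq, oscNorm, hermiteP_zero, root]
    have wallis : Wallis.W 0 = 1 := by simp [Wallis.W]
    rw [mul_zero, value, wallis, Nat.cast_zero, mul_zero, zero_add, one_mul, mul_one,
      inv_mul_cancel₀ (by positivity)]
  | succ m ih =>
    have value : osc (2 * (m + 1)) 0 ^ 2 = (2 * m + 1) / (2 * m + 2) * osc (2 * m) 0 ^ 2 := by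
      have h := osc_add_two_zero_sq (2 * m)
      push_cast at h
      rw [mul_add_one, div_mul_eq_mul_div, eq_div_iff (by positivity)]
      linarith
    have value_four : osc (2 * (m + 1)) 0 ^ 4 =
        ((2 * m + 1) / (2 * m + 2)) ^ 2 * osc (2 * m) 0 ^ 4 := by
      linear_combination
        (osc (2 * (m + 1)) 0 ^ 2 + (2 * m + 1) / (2 * m + 2) * osc (2 * m) 0 ^ 2) * value
    rw [value_four, Wallis.W_succ]
    refine Eq.trans ?_ ih
    push_cast
    field_simp
    ring

/-- The WKB energy of `osc n` at the origin, where its frequency is `√(n + 1/2)`. -/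
def centralEnergy (n : ℕ) : ℝ :=
  oscDeriv n 0 ^ 2 / √(n + 1 / 2) + √(n + 1 / 2) * osc n 0 ^ 2

theorem centralEnergy_nonneg (n : ℕ) : 0 ≤ centralEnergy n := by
  rw [centralEnergy]; positivity

/-- `(π/2) / W m`, the reciprocal relative error of the `m`-th Wallis product. -/
def wallisRatio (m : ℕ) : ℝ := π / 2 / Wallis.W m

theorem one_le_wallisRatio (m : ℕ) : 1 ≤ wallisRatio m :=
  (one_le_div (Wallis.W_pos m)).2 (Wallis.W_le m)

theorem wallisRatio_mul_le (m : ℕ) : wallisRatio m * (2 * m + 1) ≤ 2 * m + 2 := by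
  have h := Wallis.le_W m
  rw [div_mul_eq_mul_div, div_le_iff₀ (by positivity)] at h
  rw [wallisRatio, div_mul_eq_mul_div, div_le_iff₀ (Wallis.W_pos m)]
  linarith

theorem pi_mul_osc_two_mul_zero_pow_four (m : ℕ) :
    π ^ 2 * osc (2 * m) 0 ^ 4 = wallisRatio m / (2 * m + 1) := by
  have hW := Wallis.W_pos m
  rw [wallisRatio, div_div, eq_div_iff (by positivity)]
  linear_combination π / 2 * osc_two_mul_zero_pow_four_mul_wallis m

theorem pi_mul_centralEnergy_even_sq (m : ℕ) :
    (π * centralEnergy (2 * m)) ^ 2 = wallisRatio m * ((2 * m + 1 / 2) / (2 * m + 1)) := by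
  have root : √((2 * m : ℝ) + 1 / 2) ^ 2 = 2 * m + 1 / 2 := sq_sqrt (by positivity)
  have hE : centralEnergy (2 * m) = √((2 * m : ℝ) + 1 / 2) * osc (2 * m) 0 ^ 2 := by
    simp [centralEnergy, oscDeriv, osc_two_mul_add_one_zero]
  calc (π * centralEnergy (2 * m)) ^ 2
      = √((2 * m : ℝ) + 1 / 2) ^ 2 * (π ^ 2 * osc (2 * m) 0 ^ 4) := by rw [hE]; ring
    _ = _ := by rw [root, pi_mul_osc_two_mul_zero_pow_four]; ring

theorem pi_mul_centralEnergy_odd_sq (m : ℕ) :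
    (π * centralEnergy (2 * m + 1)) ^ 2 = wallisRatio m * ((2 * m + 1) / (2 * m + 3 / 2)) := by
  have root : √((2 * m : ℝ) + 3 / 2) ^ 2 = 2 * m + 3 / 2 := sq_sqrt (by positivity)
  have hE : centralEnergy (2 * m + 1) = (2 * m + 1) * osc (2 * m) 0 ^ 2 / √(2 * m + 3 / 2) := by
    rw [centralEnergy, oscDeriv_succ, osc_two_mul_add_one_zero,
      show ((2 * m + 1 : ℕ) : ℝ) + 1 / 2 = 2 * m + 3 / 2 by push_cast; ring]
    simp only [mul_zero, sub_zero, mul_pow]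
    rw [sq_sqrt (by positivity)]
    push_cast
    ring
  calc (π * centralEnergy (2 * m + 1)) ^ 2
      = (2 * m + 1) ^ 2 * (π ^ 2 * osc (2 * m) 0 ^ 4) / √(2 * m + 3 / 2) ^ 2 := by
        rw [hE, mul_div_assoc', div_pow]; ring
    _ = _ := by
        rw [root, pi_mul_osc_two_mul_zero_pow_four]; field_simp

theorem abs_pi_mul_centralEnergy_even_sq_sub_one_le (m : ℕ) :
    |(π * centralEnergy (2 * m)) ^ 2 - 1| ≤ 1 / (2 * (m : ℝ) + 1) := by
  have lower := one_le_wallisRatio m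
  have upper := wallisRatio_mul_le m
  have h : wallisRatio m * ((2 * m + 1 / 2) / (2 * m + 1)) - 1 =
      (wallisRatio m * (2 * m + 1 / 2) - (2 * m + 1)) / (2 * m + 1) := by
    field_simp
  rw [pi_mul_centralEnergy_even_sq, h, abs_div, abs_of_pos (by positivity : 0 < 2 * (m : ℝ) + 1)]
  gcongr
  rw [abs_le]
  constructor <;> nlinarith [m.cast_nonneg (α := ℝ)]

theorem abs_pi_mul_centralEnergy_odd_sq_sub_one_le (m : ℕ) :
    |(π * centralEnergy (2 * m + 1)) ^ 2 - 1| ≤ 1 / (2 * (m : ℝ) + 1) := by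
  have lower := one_le_wallisRatio m
  have upper := wallisRatio_mul_le m
  have h : wallisRatio m * ((2 * m + 1) / (2 * m + 3 / 2)) - 1 =
      (wallisRatio m * (2 * m + 1) - (2 * m + 3 / 2)) / (2 * m + 3 / 2) := by
    field_simp
  rw [pi_mul_centralEnergy_odd_sq, h, abs_div,
    abs_of_pos (by positivity : 0 < 2 * (m : ℝ) + 3 / 2)]
  gcongr
  · rw [abs_le]
    constructor <;> nlinarith [m.cast_nonneg (α := ℝ)]
  · norm_num

theorem abs_centralEnergy_sub_le {n : ℕ} (hn : 1 ≤ n) :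
    |centralEnergy n - 1 / π| ≤ 1 / (n : ℝ) := by
  have hE := centralEnergy_nonneg n
  have square : |(π * centralEnergy n) ^ 2 - 1| ≤ 1 / (n : ℝ) := by
    rcases Nat.even_or_odd' n with ⟨m, rfl | rfl⟩
    · have hm : (0 : ℝ) < (2 * m : ℕ) := by exact_mod_cast hn
      refine (abs_pi_mul_centralEnergy_even_sq_sub_one_le m).trans (one_div_le_one_div_of_le hm ?_)
      push_cast
      linarith
    · exact_mod_cast abs_pi_mul_centralEnergy_odd_sq_sub_one_le m
  calc |centralEnergy n - 1 / π| = |π * centralEnergy n - 1| / π := by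
        rw [← abs_of_pos pi_pos, ← abs_div, abs_of_pos pi_pos, sub_div,
          mul_div_cancel_left₀ _ pi_ne_zero]
    _ ≤ |π * centralEnergy n - 1| := div_pi_le_self (abs_nonneg _)
    _ ≤ |π * centralEnergy n - 1| * (π * centralEnergy n + 1) :=
        le_mul_of_one_le_right (abs_nonneg _) (by linarith [mul_nonneg pi_pos.le hE])
    _ = |(π * centralEnergy n) ^ 2 - 1| := by
        rw [← one_pow 2, sq_sub_sq, abs_mul, one_pow,
          abs_of_pos (by positivity : 0 < π * centralEnergy n + 1), mul_comm]
    _ ≤ 1 / (n : ℝ) := square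

/-! ### The rescaled Hermite functions -/

/-- The soft edge length scale `n^(-1/6)`. -/
def edgeScale (n : ℕ) : ℝ := (n : ℝ) ^ (-(1 : ℝ) / 6)

/-- The point `2√n + n^(-1/6) x` of the unscaled spectrum with soft edge coordinate `x`. -/
def spectralCoord (n : ℕ) (x : ℝ) : ℝ := 2 * √n + edgeScale n * x

/-- The derivative of `psiN n`. -/
def psiDeriv (n : ℕ) (x : ℝ) : ℝ :=
  (n : ℝ) ^ ((1 : ℝ) / 12) * (edgeScale n * oscDeriv n (spectralCoord n x))

theorem psiN_eq (n : ℕ) (x : ℝ) :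
    psiN n x = (n : ℝ) ^ ((1 : ℝ) / 12) * osc n (spectralCoord n x) := rfl

theorem hasDerivAt_spectralCoord (n : ℕ) (x : ℝ) :
    HasDerivAt (spectralCoord n) (edgeScale n) x :=
  (((hasDerivAt_id x).const_mul (edgeScale n)).const_add (2 * √(n : ℝ))).congr_deriv (mul_one _)

theorem hasDerivAt_psiN (n : ℕ) (x : ℝ) : HasDerivAt (psiN n) (psiDeriv n x) x :=
  (((hasDerivAt_osc n (spectralCoord n x)).comp x (hasDerivAt_spectralCoord n x)).const_mul
    _).congr_deriv (by rw [psiDeriv]; ring)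

section Scaling

variable {n : ℕ}

theorem edgeScale_pos (hn : 1 ≤ n) : 0 < edgeScale n :=
  rpow_pos_of_pos (by exact_mod_cast hn) _

theorem edgeScale_le_one (hn : 1 ≤ n) : edgeScale n ≤ 1 :=
  rpow_le_one_of_one_le_of_nonpos (by exact_mod_cast hn) (by norm_num)

theorem edgeScale_pow (n j : ℕ) : edgeScale n ^ j = (n : ℝ) ^ (-(1 : ℝ) / 6 * j) := by
  rw [edgeScale, rpow_mul_natCast n.cast_nonneg]

theorem edgeScale_pow_six (n : ℕ) : edgeScale n ^ 6 = 1 / n := by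
  rw [edgeScale_pow]
  norm_num [rpow_neg_one]

theorem edgeScale_pow_four_mul (hn : 1 ≤ n) : edgeScale n ^ 4 * (n : ℝ) ^ ((2 : ℝ) / 3) = 1 := by
  rw [edgeScale_pow, ← rpow_add (by exact_mod_cast hn)]
  norm_num

theorem edgeScale_mul (hn : 1 ≤ n) : edgeScale n * (n : ℝ) ^ ((2 : ℝ) / 3) = √n := by
  rw [edgeScale, ← rpow_add (by exact_mod_cast hn), sqrt_eq_rpow]
  norm_num

theorem rpow_twelfth_sq_mul_edgeScale (hn : 1 ≤ n) :
    ((n : ℝ) ^ ((1 : ℝ) / 12)) ^ 2 * edgeScale n = 1 := by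
  rw [edgeScale, ← rpow_mul_natCast n.cast_nonneg, ← rpow_add (by exact_mod_cast hn)]
  norm_num

theorem spectralCoord_reflect (hn : 1 ≤ n) (x : ℝ) :
    spectralCoord n (-(4 * (n : ℝ) ^ ((2 : ℝ) / 3)) - x) = -spectralCoord n x := by
  rw [spectralCoord, spectralCoord, ← edgeScale_mul hn]
  ring

theorem spectralCoord_center (hn : 1 ≤ n) :
    spectralCoord n (-(2 * (n : ℝ) ^ ((2 : ℝ) / 3))) = 0 := by
  rw [spectralCoord, ← edgeScale_mul hn]
  ring

theorem edgePotential_eq_spectralCoord (hn : 1 ≤ n) (x : ℝ) :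
    edgePotential (edgeScale n ^ 2) x =
      edgeScale n ^ 2 * (spectralCoord n x ^ 2 / 4 - n - 1 / 2) := by
  have root : √(n : ℝ) ^ 2 = n := sq_sqrt n.cast_nonneg
  have cube : edgeScale n ^ 3 * √n = 1 := by
    rw [← edgeScale_pow_four_mul hn, ← edgeScale_mul hn]; ring
  rw [edgePotential, spectralCoord]
  linear_combination -x * cube - edgeScale n ^ 2 * root

theorem isSchrodingerSolution_psiN (hn : 1 ≤ n) :
    IsSchrodingerSolution (edgePotential (edgeScale n ^ 2)) (psiN n) (psiDeriv n) where
  hasDerivAt := hasDerivAt_psiN n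
  hasDerivAt_deriv x := by
    refine ((((hasDerivAt_oscDeriv n (spectralCoord n x)).comp x
      (hasDerivAt_spectralCoord n x)).const_mul (edgeScale n)).const_mul
      ((n : ℝ) ^ ((1 : ℝ) / 12))).congr_deriv ?_
    rw [edgePotential_eq_spectralCoord hn, psiN_eq]
    ring

theorem tendsto_spectralCoord (hn : 1 ≤ n) : Tendsto (spectralCoord n) atTop atTop :=
  tendsto_atTop_add_const_left _ _ (tendsto_id.const_mul_atTop (edgeScale_pos hn))

theorem tendsto_psiN (hn : 1 ≤ n) : Tendsto (psiN n) atTop (𝓝 0) := by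
  have h := ((tendsto_osc n).comp (tendsto_spectralCoord hn)).const_mul ((n : ℝ) ^ ((1 : ℝ) / 12))
  rwa [mul_zero] at h

theorem tendsto_psiDeriv (hn : 1 ≤ n) : Tendsto (psiDeriv n) atTop (𝓝 0) := by
  have h := (((tendsto_oscDeriv n).comp (tendsto_spectralCoord hn)).const_mul
    (edgeScale n)).const_mul ((n : ℝ) ^ ((1 : ℝ) / 12))
  rwa [mul_zero, mul_zero] at h

theorem tendsto_id_mul_psiN (hn : 1 ≤ n) : Tendsto (fun x => x * psiN n x) atTop (𝓝 0) := by
  have hk := edgeScale_pos hn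
  have h := ((((tendsto_id_mul_osc n).comp (tendsto_spectralCoord hn)).const_mul
    ((n : ℝ) ^ ((1 : ℝ) / 12))).sub ((tendsto_psiN hn).const_mul (2 * √n))).const_mul
    (edgeScale n)⁻¹
  simp only [mul_zero, sub_zero] at h
  refine h.congr fun x => ?_
  rw [inv_mul_eq_iff_eq_mul₀ hk.ne', psiN_eq, Function.comp_apply]
  simp only [spectralCoord]
  ring

theorem edgeScale_sq_sq_mul_center (hn : 1 ≤ n) :
    (edgeScale n ^ 2) ^ 2 * (2 * (n : ℝ) ^ ((2 : ℝ) / 3)) = 2 := by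
  linear_combination 2 * edgeScale_pow_four_mul hn

theorem edgeEnergy_psiN_center (hn : 1 ≤ n) :
    edgeEnergy (edgeScale n ^ 2) (psiN n) (psiDeriv n) (2 * (n : ℝ) ^ ((2 : ℝ) / 3)) =
      centralEnergy n := by
  have hk := edgeScale_pos hn
  have frequency : edgeFrequency (edgeScale n ^ 2) (2 * (n : ℝ) ^ ((2 : ℝ) / 3)) =
      edgeScale n * √(n + 1 / 2) := by
    rw [edgeFrequency, edgePotential_eq_spectralCoord hn, spectralCoord_center hn,
      show -(edgeScale n ^ 2 * ((0 : ℝ) ^ 2 / 4 - n - 1 / 2)) =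
        edgeScale n ^ 2 * (n + 1 / 2) by ring,
      sqrt_mul (sq_nonneg _), sqrt_sq hk.le]
  rw [edgeEnergy, wkbEnergy, frequency, psiDeriv, psiN_eq, spectralCoord_center hn, centralEnergy]
  have hr : √((n : ℝ) + 1 / 2) ≠ 0 := (sqrt_pos.2 (by positivity)).ne'
  generalize √((n : ℝ) + 1 / 2) = r at hr ⊢
  field_simp
  linear_combination (oscDeriv n 0 ^ 2 + r ^ 2 * osc n 0 ^ 2) * rpow_twelfth_sq_mul_edgeScale hn

theorem abs_edgeEnergy_psiN_sub_le (hn : 1 ≤ n) {s : ℝ} (hs : s ∈ edgeBulk (edgeScale n ^ 2)) :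
    |edgeEnergy (edgeScale n ^ 2) (psiN n) (psiDeriv n) s - 1 / π| ≤ 22 / (s * √s) := by
  have center := edgeScale_sq_sq_mul_center hn
  have scale_pos := edgeScale_pos hn
  have weight_pos : 0 < s * √s := by linarith [one_le_mul_sqrt hs.1]
  have s_le : s ≤ 2 * (n : ℝ) ^ ((2 : ℝ) / 3) :=
    le_of_mul_le_mul_left (hs.2.trans_eq center.symm) (by positivity)
  have to_center : |edgeEnergy (edgeScale n ^ 2) (psiN n) (psiDeriv n) s - centralEnergy n| ≤
      10 * centralEnergy n / (s * √s) := by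
    refine (isSchrodingerSolution_psiN hn).abs_edgeEnergy_sub_le_of_tendsto (sq_nonneg _) hs
      (l := pure (2 * (n : ℝ) ^ ((2 : ℝ) / 3))) ?_ ?_ ?_
    · exact eventually_pure.2 ⟨⟨hs.1.trans s_le, center.le⟩, s_le⟩
    · have rate : edgeRate (edgeScale n ^ 2) (2 * (n : ℝ) ^ ((2 : ℝ) / 3)) = 0 := by
        rw [edgeRate, center, div_self two_ne_zero, sub_self, zero_div]
      rw [← rate]
      exact tendsto_pure_nhds _ _
    · rw [← edgeEnergy_psiN_center hn]
      exact tendsto_pure_nhds _ _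
  have central := abs_centralEnergy_sub_le hn
  have inv_le : 1 / (n : ℝ) ≤ 8 / (s * √s) := by
    have h : (edgeScale n ^ 2 * √s) ^ 3 ≤ 2 ^ 3 := by
      gcongr
      exact mul_sqrt_le_two hs
    have root : √s ^ 2 = s := sq_sqrt (by linarith [hs.1])
    rw [← edgeScale_pow_six, le_div_iff₀ weight_pos]
    calc edgeScale n ^ 6 * (s * √s) = (edgeScale n ^ 2 * √s) ^ 3 := by
          linear_combination -edgeScale n ^ 6 * √s * root
      _ ≤ 8 := by linarith
  have central_le : 10 * centralEnergy n ≤ 14 := by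
    have : 1 / (n : ℝ) ≤ 1 := (div_le_one (by positivity)).2 (by exact_mod_cast hn)
    have : 1 / π ≤ 1 / 3 := one_div_le_one_div_of_le three_pos pi_gt_three.le
    linarith [(abs_le.1 central).2]
  calc _ ≤ _ := abs_sub_le _ (centralEnergy n) _
    _ ≤ 14 / (s * √s) + 8 / (s * √s) :=
      add_le_add (to_center.trans (by gcongr)) (central.trans inv_le)
    _ = 22 / (s * √s) := by ring

theorem isNormalizedEdgeSolution_psiN (hn : 1 ≤ n) :
    IsNormalizedEdgeSolution 22 (edgeScale n ^ 2) (psiN n) (psiDeriv n) where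
  toIsSchrodingerSolution := isSchrodingerSolution_psiN hn
  nonneg := sq_nonneg _
  le_one := pow_le_one₀ (edgeScale_pos hn).le (edgeScale_le_one hn)
  tendsto_zero := tendsto_psiN hn
  tendsto_deriv_zero := tendsto_psiDeriv hn
  tendsto_id_mul_zero := tendsto_id_mul_psiN hn
  abs_energy_sub_le _ hs := abs_edgeEnergy_psiN_sub_le hn hs

theorem four_mul_rpow_eq (hn : 1 ≤ n) :
    4 * (n : ℝ) ^ ((2 : ℝ) / 3) = 4 / (edgeScale n ^ 2) ^ 2 := by
  have hk := edgeScale_pos hn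
  rw [eq_div_iff (by positivity)]
  linear_combination 4 * edgeScale_pow_four_mul hn

theorem rhoN_eq_edgeDensity (hn : 1 ≤ n) (x : ℝ) :
    rhoN n x = edgeDensity (edgeScale n ^ 2) (psiN n) (psiDeriv n) x := by
  rw [rhoN, edgeDensity, (hasDerivAt_psiN n x).deriv, four_mul_rpow_eq hn, div_div_eq_mul_div]
  ring

theorem rhoHatN_eq_semicircleEdge (hn : 1 ≤ n) {x : ℝ}
    (hx : -(2 * (n : ℝ) ^ ((2 : ℝ) / 3)) ≤ x) :
    rhoHatN n x = semicircleEdge (edgeScale n ^ 2) x := by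
  have hN : 0 < (n : ℝ) ^ ((2 : ℝ) / 3) := rpow_pos_of_pos (by exact_mod_cast hn) _
  have inside : -(4 * (n : ℝ) ^ ((2 : ℝ) / 3)) < x := by linarith
  rw [rhoHatN, semicircleEdge, four_mul_rpow_eq hn, div_div_eq_mul_div, mul_comm x]
  rw [four_mul_rpow_eq hn] at inside
  simp only [inside, true_and]

theorem edgeScale_sq_sq_mul_neg_le (hn : 1 ≤ n) {x : ℝ}
    (hx : -(2 * (n : ℝ) ^ ((2 : ℝ) / 3)) ≤ x) : (edgeScale n ^ 2) ^ 2 * -x ≤ 2 := by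
  rw [← edgeScale_sq_sq_mul_center hn]
  gcongr
  linarith

theorem rhoN_reflect (hn : 1 ≤ n) (x : ℝ) :
    rhoN n (-(4 * (n : ℝ) ^ ((2 : ℝ) / 3)) - x) = rhoN n x := by
  have sign : ((-1 : ℝ) ^ n) ^ 2 = 1 := by rw [← pow_mul, (even_two.mul_left n).neg_one_pow]
  have density (y : ℝ) : rhoN n y = ((n : ℝ) ^ ((1 : ℝ) / 12)) ^ 2 * edgeScale n ^ 2 *
      (oscDeriv n (spectralCoord n y) ^ 2 -
        (spectralCoord n y ^ 2 / 4 - n) * osc n (spectralCoord n y) ^ 2) := by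
    have potential := edgePotential_eq_spectralCoord hn y
    rw [edgePotential] at potential
    rw [rhoN_eq_edgeDensity hn, edgeDensity, psiDeriv, psiN_eq]
    linear_combination
      -(((n : ℝ) ^ ((1 : ℝ) / 12)) * osc n (spectralCoord n y)) ^ 2 * potential
  rw [density, density, spectralCoord_reflect hn, osc_neg, oscDeriv_neg]
  linear_combination ((n : ℝ) ^ ((1 : ℝ) / 12)) ^ 2 * edgeScale n ^ 2 *
    (oscDeriv n (spectralCoord n x) ^ 2 -
      (spectralCoord n x ^ 2 / 4 - n) * osc n (spectralCoord n x) ^ 2) * sign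

theorem rhoN_le (hn : 1 ≤ n) (x : ℝ) : rhoN n x ≤ (edgeConst 22 + 1) * √(|x| + 1) := by
  have solution := isNormalizedEdgeSolution_psiN hn
  have right_half {y : ℝ} (hy : -(2 * (n : ℝ) ^ ((2 : ℝ) / 3)) ≤ y) :
      rhoN n y ≤ (edgeConst 22 + 1) * √(|y| + 1) := by
    rw [rhoN_eq_edgeDensity hn]
    exact solution.edgeDensity_le (edgeScale_sq_sq_mul_neg_le hn hy)
  rcases le_total (-(2 * (n : ℝ) ^ ((2 : ℝ) / 3))) x with right | left
  · exact right_half right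
  · have hC : 0 ≤ edgeConst 22 := edgeConst_nonneg (by norm_num)
    have hN : 0 ≤ (n : ℝ) ^ ((2 : ℝ) / 3) := rpow_nonneg n.cast_nonneg _
    have reflected_le : |-(4 * (n : ℝ) ^ ((2 : ℝ) / 3)) - x| ≤ |x| :=
      abs_le.2 ⟨by linarith [neg_abs_le x], by linarith [neg_abs_le x]⟩
    rw [← rhoN_reflect hn]
    exact (right_half (by linarith)).trans (by gcongr)

end Scaling

/-! ### The Airy function as a contour integral -/

section AiryContour

open Complex (I)

theorem pow_le_factorial_mul_exp {y : ℝ} (hy : 0 ≤ y) (k : ℕ) :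
    y ^ k ≤ k.factorial * exp y := by
  have h := pow_div_factorial_le_exp y hy k
  rwa [div_le_iff₀' (by positivity)] at h

theorem hasDerivAt_comp_line {f F : ℂ → ℂ} (hF : ∀ z, HasDerivAt F (f z) z) (p q : ℂ) (t : ℝ) :
    HasDerivAt (fun t : ℝ => F (p + q * t)) (q * f (p + q * t)) t := by
  have hline : HasDerivAt (fun t : ℝ => p + q * (t : ℂ)) q t := by
    simpa using (Complex.ofRealCLM.hasDerivAt.const_mul q).const_add p
  exact ((hF _).comp t hline).congr_deriv (mul_comm _ _)

/-- The integrand of the contour representation of `π • Ai⁽ᵏ⁾(x)`. -/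
def airyIntegrand (k : ℕ) (x : ℝ) (z : ℂ) : ℂ :=
  (I * z) ^ k * Complex.exp (I * (z ^ 3 / 3 + x * z))

variable (k : ℕ) (x : ℝ)

theorem differentiable_airyIntegrand : Differentiable ℂ (airyIntegrand k x) := by
  unfold airyIntegrand
  fun_prop

@[fun_prop]
theorem continuous_airyIntegrand : Continuous (airyIntegrand k x) :=
  (differentiable_airyIntegrand k x).continuous

theorem norm_airyIntegrand (z : ℂ) :
    ‖airyIntegrand k x z‖ =
      ‖z‖ ^ k * exp (-(z.re ^ 2 * z.im - z.im ^ 3 / 3 + x * z.im)) := by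
  have hcube : z ^ 3 / 3 = z ^ 3 * ((1 / 3 : ℝ) : ℂ) := by push_cast; ring
  rw [airyIntegrand, norm_mul, norm_pow, norm_mul, Complex.norm_I, one_mul, Complex.norm_exp,
    hcube]
  congr 2
  simp only [pow_succ, pow_zero, one_mul, Complex.mul_re, Complex.mul_im, Complex.add_re,
    Complex.add_im, Complex.I_re, Complex.I_im, Complex.ofReal_re, Complex.ofReal_im]
  ring

theorem airyIntegrand_I_mul (y : ℝ) :
    airyIntegrand k x (I * y) = (((-y) ^ k * exp (y ^ 3 / 3 - x * y) : ℝ) : ℂ) := by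
  have hI : I * (I * (y : ℂ)) = -y := by rw [← mul_assoc, Complex.I_mul_I, neg_one_mul]
  rw [airyIntegrand, hI]
  push_cast
  congr 2
  linear_combination ((y : ℂ) ^ 3 / 3 * (I ^ 2 - 1) + x * y) * Complex.I_sq

/-- An entire primitive of `airyIntegrand k x`; which one is immaterial. -/
def airyPrimitive : ℂ → ℂ :=
  (differentiable_airyIntegrand k x).isExactOn_univ.choose

theorem hasDerivAt_airyPrimitive (z : ℂ) :
    HasDerivAt (airyPrimitive k x) (airyIntegrand k x z) z :=
  (differentiable_airyIntegrand k x).isExactOn_univ.choose_spec z (mem_univ z)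

theorem integral_airyIntegrand_line (p q : ℂ) (a b : ℝ) :
    ∫ t in a..b, q * airyIntegrand k x (p + q * t) =
      airyPrimitive k x (p + q * b) - airyPrimitive k x (p + q * a) :=
  intervalIntegral.integral_eq_sub_of_hasDerivAt
    (fun t _ => hasDerivAt_comp_line (hasDerivAt_airyPrimitive k x) p q t)
    (Continuous.intervalIntegrable (by fun_prop) a b)

theorem re_airyPrimitive_I_mul (y : ℝ) :
    (airyPrimitive k x (I * y)).re = (airyPrimitive k x 0).re := by
  have hderiv (t : ℝ) : HasDerivAt (fun t : ℝ => (airyPrimitive k x (I * t)).re) 0 t := by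
    have h := Complex.reCLM.hasFDerivAt.comp_hasDerivAt t
      (hasDerivAt_comp_line (hasDerivAt_airyPrimitive k x) 0 I t)
    simp only [zero_add, airyIntegrand_I_mul] at h
    exact h.congr_deriv (by simp only [Complex.reCLM_apply, Complex.I_mul_re, Complex.ofReal_im,
      neg_zero])
  simpa using is_const_of_deriv_eq_zero (fun t => (hderiv t).differentiableAt)
    (fun t => (hderiv t).deriv) y 0

theorem norm_airyIntegrand_I_add_le {t : ℝ} (ht : 0 ≤ t) :
    ‖airyIntegrand k x (I + t)‖ ≤ k.factorial * exp (7 / 3 - x) * exp (-t) := by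
  have hnorm : ‖I + (t : ℂ)‖ ≤ 1 + t :=
    (norm_add_le _ _).trans_eq (by simp [abs_of_nonneg ht])
  have hre : (I + (t : ℂ)).re = t := by simp
  have him : (I + (t : ℂ)).im = 1 := by simp
  rw [norm_airyIntegrand, hre, him]
  calc ‖I + (t : ℂ)‖ ^ k * exp (-(t ^ 2 * 1 - 1 ^ 3 / 3 + x * 1))
      ≤ k.factorial * exp (1 + t) * exp (-(t ^ 2 * 1 - 1 ^ 3 / 3 + x * 1)) := by
        gcongr
        exact (pow_le_pow_left₀ (norm_nonneg _) hnorm k).trans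
          (pow_le_factorial_mul_exp (by positivity) k)
    _ = k.factorial * exp (1 + t + -(t ^ 2 * 1 - 1 ^ 3 / 3 + x * 1)) := by
        rw [mul_assoc, ← exp_add]
    _ ≤ k.factorial * exp (7 / 3 - x + -t) := by
        refine mul_le_mul_of_nonneg_left (exp_le_exp.2 ?_) (by positivity)
        nlinarith [sq_nonneg (t - 1)]
    _ = k.factorial * exp (7 / 3 - x) * exp (-t) := by rw [exp_add, mul_assoc]

theorem ae_norm_airyIntegrand_I_add_le :
    ∀ᵐ t : ℝ ∂volume.restrict (Ioi 0),
      ‖airyIntegrand k x (I + t)‖ ≤ k.factorial * exp (7 / 3 - x) * exp (-t) :=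
  (ae_restrict_mem measurableSet_Ioi).mono fun _ ht =>
    norm_airyIntegrand_I_add_le k x (mem_Ioi.1 ht).le

theorem integrableOn_airyIntegrand_I_add :
    IntegrableOn (fun t : ℝ => airyIntegrand k x (I + t)) (Ioi 0) :=
  Integrable.mono' ((integrableOn_exp_neg_Ioi 0).const_mul _)
    (Continuous.aestronglyMeasurable (by fun_prop)) (ae_norm_airyIntegrand_I_add_le k x)

/-- The integral of `airyIntegrand k x` along the half-line `I + t`, `0 < t`. Its real part is
`π • Ai⁽ᵏ⁾(x)`. -/
def airyContour : ℂ := ∫ t : ℝ in Ioi 0, airyIntegrand k x (I + t)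

theorem norm_airyContour_le : ‖airyContour k x‖ ≤ k.factorial * exp (7 / 3 - x) := by
  have h := norm_integral_le_of_norm_le ((integrableOn_exp_neg_Ioi 0).const_mul _)
    (ae_norm_airyIntegrand_I_add_le k x)
  rwa [integral_const_mul, integral_exp_neg_Ioi_zero, mul_one] at h

theorem hasDerivAt_airyIntegrand_param (z : ℂ) :
    HasDerivAt (fun x => airyIntegrand k x z) (airyIntegrand (k + 1) x z) x := by
  have h : HasDerivAt (fun x : ℝ => I * (z ^ 3 / 3 + (x : ℂ) * z)) (I * z) x := by
    simpa using ((Complex.ofRealCLM.hasDerivAt.mul_const z).const_add (z ^ 3 / 3)).const_mul I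
  exact (h.cexp.const_mul ((I * z) ^ k)).congr_deriv (by rw [airyIntegrand]; ring)

theorem hasDerivAt_airyContour : HasDerivAt (airyContour k) (airyContour (k + 1) x) x := by
  refine (hasDerivAt_integral_of_dominated_loc_of_deriv_le
    (F := fun x (t : ℝ) => airyIntegrand k x (I + t))
    (F' := fun x (t : ℝ) => airyIntegrand (k + 1) x (I + t))
    (bound := fun t => (k + 1).factorial * exp (7 / 3 - (x - 1)) * exp (-t))
    (Ioi_mem_nhds (sub_one_lt x))
    (Eventually.of_forall fun y => Continuous.aestronglyMeasurable (by fun_prop))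
    (integrableOn_airyIntegrand_I_add k x) (Continuous.aestronglyMeasurable (by fun_prop)) ?_
    ((integrableOn_exp_neg_Ioi 0).const_mul _)
    (Eventually.of_forall fun t y _ => hasDerivAt_airyIntegrand_param k y _)).2
  filter_upwards [ae_restrict_mem measurableSet_Ioi] with t ht y hy
  refine (norm_airyIntegrand_I_add_le (k + 1) y (mem_Ioi.1 ht).le).trans ?_
  gcongr
  exact (mem_Ioi.1 hy).le

theorem hasDerivAt_airyIntegrand_zero (z : ℂ) :
    HasDerivAt (airyIntegrand 0 x) (-I * (airyIntegrand 2 x z - x * airyIntegrand 0 x z)) z := by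
  have hphase : HasDerivAt (fun z : ℂ => I * (z ^ 3 / 3 + x * z)) (I * (z ^ 2 + x)) z :=
    ((((hasDerivAt_id' z).fun_pow 3).div_const 3).fun_add
      ((hasDerivAt_id' z).const_mul (x : ℂ))).const_mul I |>.congr_deriv (by push_cast; ring)
  have hzero : airyIntegrand 0 x = fun z => Complex.exp (I * (z ^ 3 / 3 + x * z)) := by
    funext z
    rw [airyIntegrand, pow_zero, one_mul]
  rw [hzero]
  refine hphase.cexp.congr_deriv ?_
  rw [airyIntegrand]
  linear_combination (Complex.exp (I * (z ^ 3 / 3 + x * z)) * z ^ 2 * I) * Complex.I_sq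

theorem tendsto_airyIntegrand_I_add_atTop :
    Tendsto (fun t : ℝ => airyIntegrand k x (I + t)) atTop (𝓝 0) := by
  refine squeeze_zero_norm' ((eventually_ge_atTop 0).mono fun t ht =>
    norm_airyIntegrand_I_add_le k x ht) ?_
  simpa using tendsto_exp_neg_atTop_nhds_zero.const_mul (k.factorial * exp (7 / 3 - x))

theorem re_airyContour_two : (airyContour 2 x).re = x * (airyContour 0 x).re := by
  have hderiv (t : ℝ) : HasDerivAt (fun t : ℝ => airyIntegrand 0 x (I + t))
      (-I * (airyIntegrand 2 x (I + t) - x * airyIntegrand 0 x (I + t))) t := by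
    simpa only [one_mul] using hasDerivAt_comp_line (hasDerivAt_airyIntegrand_zero x) I 1 t
  have hint2 := integrableOn_airyIntegrand_I_add 2 x
  have hint0 := (integrableOn_airyIntegrand_I_add 0 x).const_mul (x : ℂ)
  have hftc := integral_Ioi_of_hasDerivAt_of_tendsto' (a := 0) (fun t _ => hderiv t)
    ((hint2.sub hint0).const_mul (-I)) (tendsto_airyIntegrand_I_add_atTop 0 x)
  have hstart : airyIntegrand 0 x (I + (0 : ℝ)) = (exp (1 / 3 - x) : ℝ) := by
    simpa using airyIntegrand_I_mul 0 x 1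
  rw [integral_const_mul, integral_sub hint2 hint0, integral_const_mul, hstart] at hftc
  have him := congrArg Complex.im hftc
  simp only [neg_mul, Complex.neg_im, Complex.I_mul_im, zero_sub, Complex.ofReal_im,
    Complex.sub_re, Complex.re_ofReal_mul] at him
  simp only [airyContour]
  linarith

theorem tendsto_airyPrimitive_I_add :
    Tendsto (fun b : ℝ => airyPrimitive k x (I + b)) atTop
      (𝓝 (airyPrimitive k x I + airyContour k x)) := by
  refine ((intervalIntegral_tendsto_integral_Ioi 0 (integrableOn_airyIntegrand_I_add k x)
    tendsto_id).const_add (airyPrimitive k x I)).congr fun b => ?_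
  have h := integral_airyIntegrand_line k x I 1 0 b
  simp only [one_mul, Complex.ofReal_zero, add_zero] at h
  rw [id, h, add_sub_cancel]

theorem norm_airyIntegrand_zero_vertical (b y : ℝ) :
    ‖airyIntegrand 0 x (b + I * y)‖ = exp (-(b ^ 2 * y + (x * y - y ^ 3 / 3))) := by
  have hre : ((b : ℂ) + I * y).re = b := by simp
  have him : ((b : ℂ) + I * y).im = y := by simp
  rw [norm_airyIntegrand, pow_zero, one_mul, hre, him]
  ring_nf

theorem norm_airyIntegrand_zero_vertical_le {y : ℝ} (hy : y ∈ Ioc 0 1) (b : ℝ) :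
    ‖airyIntegrand 0 x (b + I * y)‖ ≤ exp (1 / 3 + |x|) := by
  have hcube : y ^ 3 ≤ 1 := pow_le_one₀ hy.1.le hy.2
  have hlin : -(x * y) ≤ |x| := by
    calc -(x * y) ≤ |x| * |y| := (neg_le_abs _).trans_eq (abs_mul x y)
      _ ≤ |x| * 1 := by gcongr; exact abs_le.2 ⟨by linarith [hy.1], hy.2⟩
      _ = |x| := mul_one _
  have hquad : 0 ≤ b ^ 2 * y := mul_nonneg (sq_nonneg b) hy.1.le
  rw [norm_airyIntegrand_zero_vertical, exp_le_exp]
  linarith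

theorem tendsto_airyIntegrand_zero_vertical {y : ℝ} (hy : 0 < y) :
    Tendsto (fun b : ℝ => airyIntegrand 0 x (b + I * y)) atTop (𝓝 0) := by
  rw [tendsto_zero_iff_norm_tendsto_zero]
  simp only [norm_airyIntegrand_zero_vertical]
  exact tendsto_exp_neg_atTop_nhds_zero.comp (tendsto_atTop_add_const_right _ _
    ((tendsto_pow_atTop two_ne_zero).atTop_mul_const hy))

theorem tendsto_airyPrimitive_vertical :
    Tendsto (fun b : ℝ => airyPrimitive 0 x (I + b) - airyPrimitive 0 x b) atTop (𝓝 0) := by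
  have h : Tendsto (fun b : ℝ => ∫ y in (0 : ℝ)..1, I * airyIntegrand 0 x (b + I * y)) atTop
      (𝓝 (∫ _ in (0 : ℝ)..1, (0 : ℂ))) := by
    refine intervalIntegral.tendsto_integral_filter_of_dominated_convergence
      (fun _ => exp (1 / 3 + |x|))
      (Eventually.of_forall fun b => Continuous.aestronglyMeasurable (by fun_prop))
      (Eventually.of_forall fun b => Eventually.of_forall fun y hy => ?_)
      intervalIntegrable_const (Eventually.of_forall fun y hy => ?_)
    · rw [uIoc_of_le zero_le_one] at hy
      rw [norm_mul, Complex.norm_I, one_mul]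
      exact norm_airyIntegrand_zero_vertical_le x hy b
    · rw [uIoc_of_le zero_le_one] at hy
      simpa using (tendsto_airyIntegrand_zero_vertical x hy.1).const_mul I
  rw [intervalIntegral.integral_zero] at h
  refine h.congr fun b => ?_
  rw [integral_airyIntegrand_line]
  simp [add_comm]

theorem integral_cos_eq_re_airyPrimitive (b : ℝ) :
    ∫ t in (0 : ℝ)..b, cos (t ^ 3 / 3 + x * t) =
      (airyPrimitive 0 x b).re - (airyPrimitive 0 x 0).re := by
  have hftc := integral_airyIntegrand_line 0 x 0 1 0 b
  simp only [one_mul, zero_add, Complex.ofReal_zero] at hftc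
  rw [← Complex.sub_re, ← hftc, ← Complex.reCLM_apply, ← Complex.reCLM.intervalIntegral_comp_comm
    (Continuous.intervalIntegrable (by fun_prop) 0 b)]
  congr 1 with t
  have hphase : I * ((t : ℂ) ^ 3 / 3 + x * t) = ((t ^ 3 / 3 + x * t : ℝ) : ℂ) * I := by
    push_cast
    ring
  rw [airyIntegrand, pow_zero, one_mul, hphase]
  exact (Complex.exp_ofReal_mul_I_re _).symm

theorem tendsto_integral_cos_re_airyContour :
    Tendsto (fun b : ℝ => ∫ t in (0 : ℝ)..b, cos (t ^ 3 / 3 + x * t)) atTop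
      (𝓝 (airyContour 0 x).re) := by
  have hreal : Tendsto (fun b : ℝ => airyPrimitive 0 x b) atTop
      (𝓝 (airyPrimitive 0 x I + airyContour 0 x)) := by
    simpa using (tendsto_airyPrimitive_I_add 0 x).sub (tendsto_airyPrimitive_vertical x)
  have hre := ((Complex.continuous_re.tendsto _).comp hreal).sub_const (airyPrimitive 0 x 0).re
  have hI : (airyPrimitive 0 x I).re = (airyPrimitive 0 x 0).re := by
    simpa using re_airyPrimitive_I_mul 0 x 1
  rw [Complex.add_re, hI, add_sub_cancel_left] at hre
  simpa only [integral_cos_eq_re_airyPrimitive, Function.comp_def] using hre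

/-- The `k`-th derivative of the Airy function, as a contour integral. -/
def airyDeriv : ℝ := (airyContour k x).re / π

theorem Ai_eq_airyDeriv_zero : Ai = airyDeriv 0 := by
  funext x
  rw [Ai, (tendsto_integral_cos_re_airyContour x).limUnder_eq, airyDeriv, one_div_mul_eq_div]

theorem hasDerivAt_airyDeriv : HasDerivAt (airyDeriv k) (airyDeriv (k + 1) x) x :=
  (Complex.reCLM.hasFDerivAt.comp_hasDerivAt x (hasDerivAt_airyContour k x)).div_const π

theorem hasDerivAt_Ai : HasDerivAt Ai (airyDeriv 1 x) x :=
  Ai_eq_airyDeriv_zero ▸ hasDerivAt_airyDeriv 0 x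

theorem airyDeriv_two : airyDeriv 2 x = x * Ai x := by
  rw [Ai_eq_airyDeriv_zero, airyDeriv, airyDeriv, re_airyContour_two, mul_div_assoc]

theorem abs_airyDeriv_le : |airyDeriv k x| ≤ k.factorial * exp (7 / 3) * exp (-x) := by
  rw [airyDeriv, abs_div, abs_of_pos pi_pos]
  calc |(airyContour k x).re| / π ≤ |(airyContour k x).re| := div_pi_le_self (abs_nonneg _)
    _ ≤ ‖airyContour k x‖ := Complex.abs_re_le_norm _
    _ ≤ k.factorial * exp (7 / 3 - x) := norm_airyContour_le k x
    _ = k.factorial * exp (7 / 3) * exp (-x) := by rw [sub_eq_add_neg, exp_add, mul_assoc]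

theorem tendsto_pow_mul_airyDeriv_atTop (m : ℕ) :
    Tendsto (fun x => x ^ m * airyDeriv k x) atTop (𝓝 0) := by
  have hexp := (tendsto_pow_mul_exp_neg_atTop_nhds_zero m).const_mul (k.factorial * exp (7 / 3))
  rw [mul_zero] at hexp
  refine squeeze_zero_norm' ((eventually_ge_atTop 0).mono fun x hx => ?_) hexp
  rw [norm_mul, norm_of_nonneg (pow_nonneg hx m), norm_eq_abs]
  calc x ^ m * |airyDeriv k x| ≤ x ^ m * (k.factorial * exp (7 / 3) * exp (-x)) := by
        gcongr
        exact abs_airyDeriv_le k x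
    _ = k.factorial * exp (7 / 3) * (x ^ m * exp (-x)) := by ring

end AiryContour

/-! ### Steepest descent for the Airy function at `-∞` -/

section SteepestDescent

open Complex (I)

variable (k : ℕ) (x : ℝ)

theorem norm_airyIntegrand_vertical_le {b y : ℝ} (hy : 1 ≤ y) (hyb : y ≤ b) (hb : 3 ≤ b)
    (hxb : 3 * -x ≤ b ^ 2) :
    ‖airyIntegrand k x (b + I * y)‖ ≤ (2 * b) ^ k * exp (-b) := by
  have hnorm : ‖(b : ℂ) + I * y‖ ≤ 2 * b := by
    refine (norm_add_le _ _).trans ?_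
    rw [norm_mul, Complex.norm_I, one_mul, Complex.norm_of_nonneg (by linarith),
      Complex.norm_of_nonneg (by linarith)]
    linarith
  have hre : ((b : ℂ) + I * y).re = b := by simp
  have him : ((b : ℂ) + I * y).im = y := by simp
  have hdecay : b ≤ b ^ 2 * y - y ^ 3 / 3 + x * y := by
    have hsq : y ^ 2 ≤ b ^ 2 := by gcongr
    calc b ≤ 1 * (b ^ 2 / 3) := by nlinarith
      _ ≤ y * (b ^ 2 / 3) := by gcongr
      _ ≤ y * (b ^ 2 - y ^ 2 / 3 + x) := by gcongr; linarith
      _ = b ^ 2 * y - y ^ 3 / 3 + x * y := by ring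
  rw [norm_airyIntegrand, hre, him]
  gcongr

theorem norm_airyPrimitive_vertical_sub_le {a b : ℝ} (ha : 0 ≤ a) (hab : 1 + a ≤ b) (hb : 3 ≤ b)
    (hxb : 3 * -x ≤ b ^ 2) :
    ‖airyPrimitive k x (b + I * (b - a : ℝ)) - airyPrimitive k x (I + b)‖ ≤
      (2 * b) ^ k * exp (-b) * (2 * b) := by
  have hmv := (convex_Icc 1 b).norm_image_sub_le_of_norm_hasDerivWithin_le
    (f := fun y : ℝ => airyPrimitive k x (b + I * y)) (C := (2 * b) ^ k * exp (-b))
    (fun y _ => (hasDerivAt_comp_line (hasDerivAt_airyPrimitive k x) b I y).hasDerivWithinAt)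
    (fun y hy => by
      rw [norm_mul, Complex.norm_I, one_mul]
      exact norm_airyIntegrand_vertical_le k x hy.1 hy.2 hb hxb)
    (x := 1) (y := b - a) ⟨le_rfl, by linarith⟩ ⟨by linarith, by linarith⟩
  simp only [Complex.ofReal_one, mul_one, add_comm (b : ℂ) I] at hmv
  refine hmv.trans ?_
  gcongr
  rw [norm_of_nonneg (by linarith)]
  linarith

theorem tendsto_airyPrimitive_diagonal {a : ℝ} (ha : 0 ≤ a) :
    Tendsto (fun b : ℝ => airyPrimitive k x (b + I * (b - a : ℝ))) atTop
      (𝓝 (airyPrimitive k x I + airyContour k x)) := by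
  have hbound : Tendsto (fun b : ℝ => (2 * b) ^ k * exp (-b) * (2 * b)) atTop (𝓝 0) := by
    have h := (tendsto_pow_mul_exp_neg_atTop_nhds_zero (k + 1)).const_mul (2 ^ (k + 1))
    rw [mul_zero] at h
    exact h.congr fun b => by ring
  have hgap : Tendsto (fun b : ℝ => airyPrimitive k x (b + I * (b - a : ℝ)) -
      airyPrimitive k x (I + b)) atTop (𝓝 0) := by
    refine squeeze_zero_norm' ?_ hbound
    filter_upwards [eventually_ge_atTop (1 + a), eventually_ge_atTop 3,
      (tendsto_pow_atTop two_ne_zero).eventually_ge_atTop (3 * -x)] with b hab hb hxb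
    exact norm_airyPrimitive_vertical_sub_le k x ha hab hb hxb
  simpa using (tendsto_airyPrimitive_I_add k x).add hgap

/-- The Airy integrand at `x = -d⁴` on the line of steepest descent through its saddle point `d²`,
in the variable `u` with `z = d² + (1 + I) u / d`, normalized to `1` at the saddle; here
`h = 1 / d³`. -/
def saddleIntegrand (h u : ℝ) : ℂ :=
  (1 + (1 + I) * u * h) ^ k * Complex.exp (-2 * u ^ 2 - 2 / 3 * (1 + I) * u ^ 3 * h)

@[fun_prop]
theorem continuous_saddleIntegrand (h : ℝ) : Continuous (saddleIntegrand k h) := by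
  unfold saddleIntegrand
  fun_prop

theorem norm_one_add_one_add_I_mul_le {h : ℝ} (h₀ : 0 ≤ h) (h₁ : h ≤ 1) (u : ℝ) :
    ‖1 + (1 + I) * u * h‖ ≤ 1 + 2 * |u| := by
  have hI : ‖1 + I‖ ≤ 2 := (norm_add_le _ _).trans_eq (by rw [norm_one, Complex.norm_I]; norm_num)
  refine (norm_add_le _ _).trans ?_
  rw [norm_one, norm_mul, norm_mul, Complex.norm_real, norm_eq_abs, Complex.norm_of_nonneg h₀]
  calc 1 + ‖1 + I‖ * |u| * h ≤ 1 + 2 * |u| * 1 := by gcongr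
    _ = 1 + 2 * |u| := by rw [mul_one]

theorem norm_saddleIntegrand_le {h u : ℝ} (h₀ : 0 ≤ h) (h₁ : h ≤ 1) (hu : -1 ≤ u * h) :
    ‖saddleIntegrand k h u‖ ≤ k.factorial * exp 4 * exp (-u ^ 2) := by
  have hre : (-2 * (u : ℂ) ^ 2 - 2 / 3 * (1 + I) * u ^ 3 * h).re =
      -2 * u ^ 2 - 2 / 3 * u ^ 3 * h := by
    have hsplit : -2 * (u : ℂ) ^ 2 - 2 / 3 * (1 + I) * u ^ 3 * h =
        ((-2 * u ^ 2 - 2 / 3 * u ^ 3 * h : ℝ) : ℂ) + ((-(2 / 3) * u ^ 3 * h : ℝ) : ℂ) * I := by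
      push_cast
      ring
    rw [hsplit, Complex.add_re, Complex.ofReal_re, Complex.re_ofReal_mul, Complex.I_re, mul_zero,
      add_zero]
  rw [saddleIntegrand, norm_mul, norm_pow, Complex.norm_exp, hre]
  calc ‖1 + (1 + I) * u * h‖ ^ k * exp (-2 * u ^ 2 - 2 / 3 * u ^ 3 * h)
      ≤ k.factorial * exp (1 + 2 * |u|) * exp (-2 * u ^ 2 - 2 / 3 * u ^ 3 * h) := by
        gcongr
        exact (pow_le_pow_left₀ (norm_nonneg _) (norm_one_add_one_add_I_mul_le h₀ h₁ u) k).trans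
          (pow_le_factorial_mul_exp (by positivity) k)
    _ = k.factorial * exp (1 + 2 * |u| + (-2 * u ^ 2 - 2 / 3 * u ^ 3 * h)) := by
        rw [mul_assoc, ← exp_add]
    _ ≤ k.factorial * exp (4 + -u ^ 2) := by
        refine mul_le_mul_of_nonneg_left (exp_le_exp.2 ?_) (by positivity)
        have hcube : u ^ 2 * -1 ≤ u ^ 2 * (u * h) := by gcongr
        nlinarith [sq_nonneg (|u| - 3), sq_abs u]
    _ = k.factorial * exp 4 * exp (-u ^ 2) := by rw [exp_add, mul_assoc]

theorem norm_saddleIntegrand_one_div_pow_le {d u : ℝ} (hd : 1 ≤ d) (hu : u ∈ Ioi (-d ^ 3)) :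
    ‖saddleIntegrand k (1 / d ^ 3) u‖ ≤ k.factorial * exp 4 * exp (-u ^ 2) := by
  have hd3 : 1 ≤ d ^ 3 := one_le_pow₀ hd
  refine norm_saddleIntegrand_le k (by positivity) (div_le_one_of_le₀ hd3 (by positivity)) ?_
  rw [mul_one_div, le_div_iff₀ (by positivity), neg_one_mul]
  exact (mem_Ioi.1 hu).le

theorem integrable_exp_neg_sq : Integrable fun u : ℝ => exp (-u ^ 2) := by
  simpa using integrable_exp_neg_mul_sq one_pos

theorem integrableOn_saddleIntegrand {d : ℝ} (hd : 1 ≤ d) :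
    IntegrableOn (saddleIntegrand k (1 / d ^ 3)) (Ioi (-d ^ 3)) :=
  Integrable.mono' (integrable_exp_neg_sq.const_mul _).integrableOn
    (Continuous.aestronglyMeasurable (by fun_prop))
    ((ae_restrict_mem measurableSet_Ioi).mono fun _ => norm_saddleIntegrand_one_div_pow_le k hd)

/-- The integral of the normalized Airy integrand along the line of steepest descent, from the
imaginary axis (`u = -d³`) to infinity. -/
def saddleIntegral (d : ℝ) : ℂ := ∫ u in Ioi (-d ^ 3), saddleIntegrand k (1 / d ^ 3) u

theorem saddleIntegrand_zero (u : ℝ) : saddleIntegrand k 0 u = (exp (-2 * u ^ 2) : ℝ) := by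
  simp [saddleIntegrand]

theorem tendsto_indicator_saddleIntegrand (u : ℝ) :
    Tendsto (fun d : ℝ => (Ioi (-d ^ 3)).indicator (saddleIntegrand k (1 / d ^ 3)) u) atTop
      (𝓝 (exp (-2 * u ^ 2) : ℝ)) := by
  have hcont : Continuous fun h : ℝ => saddleIntegrand k h u := by
    unfold saddleIntegrand
    fun_prop
  have hcube : Tendsto (fun d : ℝ => d ^ 3) atTop atTop := tendsto_pow_atTop three_ne_zero
  have hlim := (hcont.tendsto 0).comp (hcube.const_div_atTop 1)
  rw [saddleIntegrand_zero] at hlim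
  refine hlim.congr' ((hcube.eventually_gt_atTop (-u)).mono fun d hd => ?_)
  exact (indicator_of_mem (mem_Ioi.2 (neg_lt.1 hd)) _).symm

theorem tendsto_saddleIntegral : Tendsto (saddleIntegral k) atTop (𝓝 (√(π / 2) : ℝ)) := by
  have hind (d : ℝ) : saddleIntegral k d =
      ∫ u, (Ioi (-d ^ 3)).indicator (saddleIntegrand k (1 / d ^ 3)) u :=
    (integral_indicator measurableSet_Ioi).symm
  rw [funext hind, ← integral_gaussian 2, ← integral_complex_ofReal]
  refine tendsto_integral_filter_of_dominated_convergence
    (fun u => k.factorial * exp 4 * exp (-u ^ 2))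
    (Eventually.of_forall fun d => (Continuous.aestronglyMeasurable (by fun_prop)).indicator
      measurableSet_Ioi)
    ((eventually_ge_atTop 1).mono fun d hd => Eventually.of_forall fun u => ?_)
    (integrable_exp_neg_sq.const_mul _)
    (Eventually.of_forall fun u => tendsto_indicator_saddleIntegrand k u)
  by_cases hu : u ∈ Ioi (-d ^ 3)
  · rw [indicator_of_mem hu]
    exact norm_saddleIntegrand_one_div_pow_le k hd hu
  · rw [indicator_of_notMem hu, norm_zero]
    positivity

/-- The value of the Airy integrand (`k = 0`) at the saddle point, times the direction `1 + I` of
steepest descent. -/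
def saddlePrefactor (d : ℝ) : ℂ := (1 + I) * Complex.exp ((-(2 / 3) * d ^ 6 : ℝ) * I)

theorem norm_saddlePrefactor_sq (d : ℝ) : ‖saddlePrefactor d‖ ^ 2 = 2 := by
  rw [saddlePrefactor, norm_mul, Complex.norm_exp_ofReal_mul_I, mul_one,
    ← Complex.normSq_eq_norm_sq, Complex.normSq_apply]
  norm_num

theorem airyPhase_steepestDescent {d : ℝ} (hd : d ≠ 0) (u : ℝ) :
    I * (((d : ℂ) ^ 2 + (1 + I) / d * u) ^ 3 / 3 +
        ((-d ^ 4 : ℝ) : ℂ) * ((d : ℂ) ^ 2 + (1 + I) / d * u)) =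
      ((-(2 / 3) * d ^ 6 : ℝ) : ℂ) * I +
        (-2 * u ^ 2 - 2 / 3 * (1 + I) * u ^ 3 * ((1 / d ^ 3 : ℝ) : ℂ)) := by
  have hdc : (d : ℂ) ≠ 0 := by exact_mod_cast hd
  have hI2 : (1 + I) ^ 2 = 2 * I := by linear_combination Complex.I_sq
  have hI3 : (1 + I) ^ 3 = -2 + 2 * I := by linear_combination (3 + I) * Complex.I_sq
  calc I * (((d : ℂ) ^ 2 + (1 + I) / d * u) ^ 3 / 3 +
        ((-d ^ 4 : ℝ) : ℂ) * ((d : ℂ) ^ 2 + (1 + I) / d * u))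
      = I * (-(2 / 3) * d ^ 6 + (1 + I) ^ 2 * u ^ 2 + (1 + I) ^ 3 * u ^ 3 / (3 * d ^ 3)) := by
        push_cast
        field_simp
        ring
    _ = ((-(2 / 3) * d ^ 6 : ℝ) : ℂ) * I +
        (-2 * u ^ 2 - 2 / 3 * (1 + I) * u ^ 3 * ((1 / d ^ 3 : ℝ) : ℂ)) := by
        rw [hI2, hI3]
        push_cast
        linear_combination (2 * (u : ℂ) ^ 2 + 2 * u ^ 3 / (3 * d ^ 3)) * Complex.I_sq

theorem airyIntegrand_steepestDescent {d : ℝ} (hd : d ≠ 0) (u : ℝ) :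
    (1 + I) / d * airyIntegrand k (-d ^ 4) ((d : ℂ) ^ 2 + (1 + I) / d * u) =
      (I * d ^ 2) ^ k / d * saddlePrefactor d * saddleIntegrand k (1 / d ^ 3) u := by
  have hdc : (d : ℂ) ≠ 0 := by exact_mod_cast hd
  have hbase : I * ((d : ℂ) ^ 2 + (1 + I) / d * u) =
      I * d ^ 2 * (1 + (1 + I) * u * ((1 / d ^ 3 : ℝ) : ℂ)) := by
    push_cast
    field_simp
  rw [airyIntegrand, saddleIntegrand, saddlePrefactor, hbase, airyPhase_steepestDescent hd,
    mul_pow, Complex.exp_add]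
  ring

theorem tendsto_airyPrimitive_steepestDescent {d : ℝ} (hd : 0 < d) :
    Tendsto (fun U : ℝ => airyPrimitive k x ((d : ℂ) ^ 2 + (1 + I) / d * U)) atTop
      (𝓝 (airyPrimitive k x I + airyContour k x)) := by
  have hdc : (d : ℂ) ≠ 0 := by exact_mod_cast hd.ne'
  have hparam : Tendsto (fun U : ℝ => d ^ 2 + U / d) atTop atTop :=
    tendsto_atTop_add_const_left _ _ (tendsto_id.atTop_div_const hd)
  refine ((tendsto_airyPrimitive_diagonal k x (sq_nonneg d)).comp hparam).congr fun U => ?_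
  rw [Function.comp_apply]
  congr 1
  push_cast
  field_simp
  ring

theorem re_airyContour_eq_saddleIntegral {d : ℝ} (hd : 1 ≤ d) :
    (airyContour k (-d ^ 4)).re =
      ((I * d ^ 2) ^ k / d * saddlePrefactor d * saddleIntegral k d).re := by
  have hd₀ : 0 < d := one_pos.trans_le hd
  have hdc : (d : ℂ) ≠ 0 := by exact_mod_cast hd₀.ne'
  have hstart : (d : ℂ) ^ 2 + (1 + I) / d * ((-d ^ 3 : ℝ) : ℂ) = I * ((-d ^ 2 : ℝ) : ℂ) := by
    push_cast
    field_simp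
    ring
  have hI : (airyPrimitive k (-d ^ 4) I).re = (airyPrimitive k (-d ^ 4) 0).re := by
    simpa using re_airyPrimitive_I_mul k (-d ^ 4) 1
  have hsaddle := (intervalIntegral_tendsto_integral_Ioi (-d ^ 3)
    (integrableOn_saddleIntegrand k hd) tendsto_id).const_mul
      ((I * d ^ 2) ^ k / d * saddlePrefactor d)
  simp only [← intervalIntegral.integral_const_mul, ← airyIntegrand_steepestDescent k hd₀.ne',
    integral_airyIntegrand_line, hstart, id] at hsaddle
  rw [saddleIntegral, tendsto_nhds_unique hsaddle
    ((tendsto_airyPrimitive_steepestDescent k _ hd₀).sub_const _), Complex.sub_re, Complex.add_re,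
    re_airyPrimitive_I_mul, hI, add_sub_cancel_left]

end SteepestDescent

section AiryEnergy

open Complex (I)

theorem tendsto_re_mul_sq_add_im_mul_sq {α : Type*} {l : Filter α} {ζ v w : α → ℂ} {c r : ℝ}
    (hζ : ∀ a, ‖ζ a‖ ^ 2 = r) (hv : Tendsto v l (𝓝 c)) (hw : Tendsto w l (𝓝 c)) :
    Tendsto (fun a => (ζ a * v a).re ^ 2 + (ζ a * w a).im ^ 2) l (𝓝 (r * c ^ 2)) := by
  have hbdd {φ : ℂ → ℝ} (hφ : ∀ z, |φ z| ≤ ‖z‖) : IsBoundedUnder (· ≤ ·) l (norm ∘ (φ ∘ ζ)) :=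
    isBoundedUnder_of ⟨√r, fun a => (hφ _).trans (le_sqrt_of_sq_le (hζ a).le)⟩
  have herr {u : α → ℂ} (hu : Tendsto u l (𝓝 c)) : Tendsto (fun a => ζ a * (u a - c)) l (𝓝 0) := by
    rw [tendsto_zero_iff_norm_tendsto_zero]
    have h := (hu.sub_const (c : ℂ)).norm.const_mul (√r)
    rw [sub_self, norm_zero, mul_zero] at h
    refine h.congr fun a => ?_
    rw [norm_mul, ← hζ a, sqrt_sq (norm_nonneg _)]
  have hre : Tendsto (fun a => (ζ a * (v a - c)).re) l (𝓝 0) :=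
    (Complex.continuous_re.tendsto 0).comp (herr hv)
  have him : Tendsto (fun a => (ζ a * (w a - c)).im) l (𝓝 0) :=
    (Complex.continuous_im.tendsto 0).comp (herr hw)
  have hcross := ((hre.zero_mul_isBoundedUnder_le (hbdd Complex.abs_re_le_norm)).add
    (him.zero_mul_isBoundedUnder_le (hbdd Complex.abs_im_le_norm))).const_mul (2 * c)
  have h := ((hcross.add (hre.pow 2)).add (him.pow 2)).const_add (r * c ^ 2)
  simp only [add_zero, mul_zero, ne_eq, two_ne_zero, not_false_eq_true, zero_pow] at h
  refine h.congr fun a => ?_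
  have hnorm : (ζ a).re * (ζ a).re + (ζ a).im * (ζ a).im = r := by
    rw [← hζ a, ← Complex.normSq_eq_norm_sq, Complex.normSq_apply]
  simp only [Function.comp_apply, Complex.mul_re, Complex.mul_im, Complex.sub_re, Complex.sub_im,
    Complex.ofReal_re, Complex.ofReal_im]
  rw [← hnorm]
  ring

theorem mul_airyDeriv_zero {d : ℝ} (hd : 1 ≤ d) :
    d * airyDeriv 0 (-d ^ 4) = (saddlePrefactor d * saddleIntegral 0 d).re / π := by
  have hdc : (d : ℂ) ≠ 0 := by exact_mod_cast (one_pos.trans_le hd).ne'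
  rw [airyDeriv, re_airyContour_eq_saddleIntegral 0 hd, ← mul_div_assoc, ← Complex.re_ofReal_mul]
  congr 2
  field_simp

theorem airyDeriv_one_div {d : ℝ} (hd : 1 ≤ d) :
    airyDeriv 1 (-d ^ 4) / d = -(saddlePrefactor d * saddleIntegral 1 d).im / π := by
  have hdc : (d : ℂ) ≠ 0 := by exact_mod_cast (one_pos.trans_le hd).ne'
  rw [airyDeriv, re_airyContour_eq_saddleIntegral 1 hd, div_right_comm, ← Complex.div_ofReal_re,
    ← Complex.I_mul_re]
  congr 2
  field_simp

theorem tendsto_airy_energy :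
    Tendsto (fun d : ℝ => (d * airyDeriv 0 (-d ^ 4)) ^ 2 + (airyDeriv 1 (-d ^ 4) / d) ^ 2) atTop
      (𝓝 (1 / π)) := by
  have h := (tendsto_re_mul_sq_add_im_mul_sq norm_saddlePrefactor_sq (tendsto_saddleIntegral 0)
    (tendsto_saddleIntegral 1)).div_const (π ^ 2)
  rw [sq_sqrt (by positivity), mul_div_cancel₀ π two_ne_zero, sq π,
    div_mul_cancel_left₀ pi_pos.ne', ← one_div] at h
  refine h.congr' ((eventually_ge_atTop 1).mono fun d hd => ?_)
  simp only [mul_airyDeriv_zero hd, airyDeriv_one_div hd]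
  ring

theorem isSchrodingerSolution_Ai :
    IsSchrodingerSolution (edgePotential 0) Ai (airyDeriv 1) where
  hasDerivAt := hasDerivAt_Ai
  hasDerivAt_deriv x := (hasDerivAt_airyDeriv 1 x).congr_deriv (by
    rw [airyDeriv_two, edgePotential]
    ring)

theorem edgeFrequency_zero_pow_four (d : ℝ) : edgeFrequency 0 (d ^ 4) = d ^ 2 := by
  rw [edgeFrequency, edgePotential, ← sqrt_sq (sq_nonneg d)]
  ring_nf

theorem tendsto_edgeEnergy_Ai :
    Tendsto (edgeEnergy 0 Ai (airyDeriv 1)) (map (fun d : ℝ => d ^ 4) atTop) (𝓝 (1 / π)) := by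
  refine tendsto_map'_iff.2 (tendsto_airy_energy.congr fun d => ?_)
  rw [Function.comp_apply, edgeEnergy, wkbEnergy, edgeFrequency_zero_pow_four,
    Ai_eq_airyDeriv_zero]
  ring

theorem mem_edgeBulk_zero {s : ℝ} (hs : 2 ≤ s) : s ∈ edgeBulk 0 := ⟨hs, by norm_num⟩

theorem tendsto_edgeRate_zero_atTop : Tendsto (edgeRate 0) atTop (𝓝 0) := by
  have hrate : Tendsto (fun s : ℝ => 2 / (s * √s)) atTop (𝓝 0) :=
    (tendsto_id.atTop_mul_atTop₀ tendsto_sqrt_atTop).const_div_atTop 2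
  refine squeeze_zero' ?_ ?_ hrate
  · filter_upwards [eventually_ge_atTop 2] with s hs
    exact edgeRate_nonneg le_rfl (mem_edgeBulk_zero hs)
  · filter_upwards [eventually_ge_atTop 2] with s hs
    exact edgeRate_le_two_div le_rfl (mem_edgeBulk_zero hs)

theorem isNormalizedEdgeSolution_Ai : IsNormalizedEdgeSolution 22 0 Ai (airyDeriv 1) where
  toIsSchrodingerSolution := isSchrodingerSolution_Ai
  nonneg := le_rfl
  le_one := zero_le_one
  tendsto_zero := by
    simpa [Ai_eq_airyDeriv_zero] using tendsto_pow_mul_airyDeriv_atTop 0 0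
  tendsto_deriv_zero := by simpa using tendsto_pow_mul_airyDeriv_atTop 1 0
  tendsto_id_mul_zero := by
    simpa [Ai_eq_airyDeriv_zero] using tendsto_pow_mul_airyDeriv_atTop 0 1
  abs_energy_sub_le s hs := by
    have hpow : Tendsto (fun d : ℝ => d ^ 4) atTop atTop := tendsto_pow_atTop four_ne_zero
    refine (isSchrodingerSolution_Ai.abs_edgeEnergy_sub_le_of_tendsto le_rfl hs
      (hpow.eventually ((eventually_ge_atTop (max 2 s)).mono fun t ht =>
        ⟨mem_edgeBulk_zero (le_of_max_le_left ht), le_of_max_le_right ht⟩))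
      (tendsto_edgeRate_zero_atTop.mono_left hpow) tendsto_edgeEnergy_Ai).trans ?_
    have hs₀ : 0 < s := two_pos.trans_le hs.1
    gcongr
    linarith [div_pi_le_self zero_le_one]

theorem rho_eq_edgeDensity (x : ℝ) : rho x = edgeDensity 0 Ai (airyDeriv 1) x := by
  rw [rho, edgeDensity, (hasDerivAt_Ai x).deriv]
  ring

theorem rhoHat_eq_semicircleEdge (x : ℝ) : rhoHat x = semicircleEdge 0 x := by
  simp [rhoHat, semicircleEdge]

end AiryEnergy

end

/-- uniform bounds comparing the (finite-`n` and limiting) soft-edge one-point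
correlation functions with `ρ̂ⁿ` and `ρ̂`. -/
theorem airy_one_correlation_bounds :
    ∃ C : ℝ, 0 < C ∧
      (∀ n : ℕ, 1 ≤ n → ∀ x : ℝ, -(2 * (n : ℝ) ^ ((2:ℝ)/3)) ≤ x → x ≠ 0 →
        |rhoN n x - rhoHatN n x| ≤ C / |x|) ∧
      (∀ x : ℝ, x ≠ 0 → |rho x - rhoHat x| ≤ C / |x|) ∧
      (∀ n : ℕ, 1 ≤ n → ∀ x : ℝ, rhoN n x ≤ C * Real.sqrt (|x| + 1)) ∧
      (∀ x : ℝ, rho x ≤ C * Real.sqrt (|x| + 1)) := by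
  have hC : 0 ≤ edgeConst 22 := edgeConst_nonneg (by norm_num)
  have hle (x : ℝ) : edgeConst 22 / |x| ≤ (edgeConst 22 + 1) / |x| := by
    gcongr
    exact le_add_of_nonneg_right zero_le_one
  refine ⟨edgeConst 22 + 1, by positivity, fun n hn x hx hx₀ => ?_, fun x hx₀ => ?_,
    fun n hn x => rhoN_le hn x, fun x => ?_⟩
  · rw [rhoN_eq_edgeDensity hn, rhoHatN_eq_semicircleEdge hn hx]
    exact ((isNormalizedEdgeSolution_psiN hn).abs_edgeDensity_sub_semicircleEdge_le hx₀
      (edgeScale_sq_sq_mul_neg_le hn hx)).trans (hle x)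
  · rw [rho_eq_edgeDensity, rhoHat_eq_semicircleEdge]
    exact (isNormalizedEdgeSolution_Ai.abs_edgeDensity_sub_semicircleEdge_le hx₀
      (by norm_num)).trans (hle x)
  · rw [rho_eq_edgeDensity]
    exact isNormalizedEdgeSolution_Ai.edgeDensity_le (by norm_num)
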